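/- Let q ≡ 1 (mod 4) and let S(X) denote the number of integers q ≤ X with q ≡ 1 (mod 4) for which the Erdős conjecture holds mod q. Then liminf_{X→∞} S(X)/(X/4) ≥ 0.82. -/

import Mathlib

open Filter Topology Finset

/-- `f : ℕ → ℤ` is Erdősian mod `q`: periodic with period `q`, takes values `±1`
off multiples of `q`, and `0` on multiples of `q`. -/
def IsErdosian (q : ℕ) (f : ℕ → ℤ) : Prop :=
  (∀ n : ℕ, 1 ≤ n → f (n + q) = f n) ∧
  (∀ n : ℕ, 1 ≤ n → ¬ q ∣ n → f n = 1 ∨ f n = -1) ∧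
  (∀ n : ℕ, 1 ≤ n → q ∣ n → f n = 0)

/-- The Erdős conjecture is false mod `q`: there is an Erdősian function mod `q`
whose partial sums `∑_{n=1}^N f(n)/n` tend to `0`. -/
def ErdosConjectureFalse (q : ℕ) : Prop :=
  ∃ f : ℕ → ℤ, IsErdosian q f ∧
    Tendsto (fun N : ℕ => ∑ n ∈ Finset.Icc 1 N, (f n : ℝ) / n) atTop (nhds 0)

/-- The Erdős conjecture holds (is true) mod `q`. -/
def ErdosConjectureHolds (q : ℕ) : Prop := ¬ ErdosConjectureFalse q

/-!
Let `f` be Erdősian mod `q` with `∑ f n / n = 0`. Finite Fourier analysis writes this sum as a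
linear form in the logarithms of the numbers `1 - ζ ^ a`, with coefficients in the cyclotomic
field. By Baker's theorem such a form vanishes together with all its Galois conjugates, so that
`∑ f (u * n) / n = 0` for every unit `u` mod `q`. Averaging against a Dirichlet character `χ`
splits off the factor `L(1, χ) ≠ 0`, and summation over `χ` leaves `∑ f m / m = 0`, where `m` runs
over the integers all of whose prime factors divide `q`. The term `m = 1` has absolute value `1`
and `∑ 1 / m = q / φ(q)`, hence `2 * φ(q) ≤ q`.

For odd `q` not divisible by `105`, the inequality `2 * φ(q) ≤ q` forces the sum of the reciprocals
of the prime factors `p ≥ 11` of `q` to be large, by an amount depending on which of `3`, `5`, `7`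
divide `q`. A first moment bound for these `q`, and a trivial one for the multiples of `105`,
show that the conjecture fails for at most `0.045 * X` of the `q ≤ X` with `q % 4 = 1`.
-/

/-! ### Entire functions with prescribed zeros -/

section EntireFunctions

variable {f : ℂ → ℂ} {T : ℕ}

theorem exists_eq_pow_mul_of_le_analyticOrderAt (hf : Differentiable ℂ f) {a : ℂ}
    (hT : T ≤ analyticOrderAt f a) :
    ∃ g : ℂ → ℂ, Differentiable ℂ g ∧ ∀ z, f z = (z - a) ^ T * g z := by
  induction T generalizing f with
  | zero => exact ⟨f, hf, by simp⟩
  | succ T ih =>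
    have slope_diff : Differentiable ℂ (dslope f a) := by
      rw [← differentiableOn_univ] at hf ⊢
      exact (Complex.differentiableOn_dslope univ_mem).2 hf
    have f_zero : f a = 0 := by
      refine apply_eq_zero_of_analyticOrderAt_ne_zero fun h => ?_
      simp [h] at hT
    have f_eq (z : ℂ) : f z = (z - a) * dslope f a z := by
      simpa [f_zero] using (sub_smul_dslope f a z).symm
    have order_eq : analyticOrderAt f a = 1 + analyticOrderAt (dslope f a) a := by
      have h_id : AnalyticAt ℂ (· - a) a := by fun_prop
      calc analyticOrderAt f a = analyticOrderAt ((· - a) * dslope f a) a :=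
            congrArg (analyticOrderAt · a) (funext f_eq)
        _ = 1 + analyticOrderAt (dslope f a) a := by
          rw [analyticOrderAt_mul h_id (slope_diff.analyticAt a), analyticOrderAt_id_sub_const_self]
    obtain ⟨g, hg, slope_eq⟩ := ih slope_diff <| by
      rwa [order_eq, add_comm, Nat.cast_add, Nat.cast_one,
        ENat.add_le_add_iff_left ENat.one_ne_top] at hT
    exact ⟨g, hg, fun z => by rw [f_eq, slope_eq, pow_succ']; ring⟩

theorem exists_eq_prod_pow_mul_of_le_analyticOrderAt (hf : Differentiable ℂ f) {s : Finset ℂ}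
    (hT : ∀ a ∈ s, T ≤ analyticOrderAt f a) :
    ∃ g : ℂ → ℂ, Differentiable ℂ g ∧ ∀ z, f z = (∏ a ∈ s, (z - a) ^ T) * g z := by
  induction s using Finset.induction_on generalizing f with
  | empty => exact ⟨f, hf, by simp⟩
  | insert a s ha ih =>
    obtain ⟨g, hg, f_eq⟩ := exists_eq_pow_mul_of_le_analyticOrderAt hf (hT a (mem_insert_self a s))
    have order_eq (b : ℂ) (hb : b ∈ s) : analyticOrderAt f b = analyticOrderAt g b := by
      have h_pow : AnalyticAt ℂ (fun z => (z - a) ^ T) b := by fun_prop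
      have h_ne : b - a ≠ 0 := sub_ne_zero.2 (ne_of_mem_of_not_mem hb ha)
      rw [show f = (fun z => (z - a) ^ T) * g from funext f_eq,
        analyticOrderAt_mul h_pow (hg.analyticAt b),
        h_pow.analyticOrderAt_eq_zero.2 (pow_ne_zero T h_ne), zero_add]
    obtain ⟨k, hk, g_eq⟩ := ih hg fun b hb => order_eq b hb ▸ hT b (mem_insert_of_mem hb)
    exact ⟨k, hk, fun z => by rw [f_eq, g_eq, prod_insert ha, mul_assoc]⟩

/-- A Schwarz lemma. The factors `z - a` have modulus at least `6 r` on the circle of radius `7 r`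
and at most `2 r` inside the disc of radius `r`, and `2 / 6 ≤ exp (-1)`. -/
theorem norm_le_mul_exp_neg_of_le_analyticOrderAt (hf : Differentiable ℂ f) {s : Finset ℂ}
    (hT : ∀ a ∈ s, T ≤ analyticOrderAt f a) {r : ℝ} (hr : 0 < r) (hs : ∀ a ∈ s, ‖a‖ ≤ r) {B : ℝ}
    (hB : ∀ z, ‖z‖ = 7 * r → ‖f z‖ ≤ B) {z : ℂ} (hz : ‖z‖ ≤ r) :
    ‖f z‖ ≤ B * Real.exp (-(#s * T)) := by
  obtain ⟨g, hg, f_eq⟩ := exists_eq_prod_pow_mul_of_le_analyticOrderAt hf hT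
  have pow_eq (x : ℝ) : x ^ (#s * T) = ∏ _a ∈ s, x ^ T := by rw [prod_const, ← pow_mul, mul_comm]
  have lower (w : ℂ) (hw : ‖w‖ = 7 * r) : (6 * r) ^ (#s * T) ≤ ‖∏ a ∈ s, (w - a) ^ T‖ := by
    rw [norm_prod, pow_eq]
    refine prod_le_prod (fun _ _ => by positivity) fun a ha => ?_
    rw [norm_pow]
    gcongr
    linarith [norm_sub_norm_le w a, hs a ha]
  have upper : ‖∏ a ∈ s, (z - a) ^ T‖ ≤ (2 * r) ^ (#s * T) := by
    rw [norm_prod, pow_eq]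
    refine prod_le_prod (fun _ _ => by positivity) fun a ha => ?_
    rw [norm_pow]
    gcongr
    linarith [norm_sub_le z a, hs a ha]
  have g_le : ‖g z‖ ≤ B / (6 * r) ^ (#s * T) := by
    refine Complex.norm_le_of_forall_mem_frontier_norm_le (U := Metric.ball 0 (7 * r))
      Metric.isBounded_ball hg.diffContOnCl (fun w hw => ?_)
      (subset_closure (mem_ball_zero_iff.2 (by linarith)))
    rw [frontier_ball _ (by positivity), mem_sphere_zero_iff_norm] at hw
    rw [le_div_iff₀ (by positivity), mul_comm]
    calc (6 * r) ^ (#s * T) * ‖g w‖ ≤ ‖∏ a ∈ s, (w - a) ^ T‖ * ‖g w‖ := by gcongr; exact lower w hw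
      _ = ‖f w‖ := by rw [f_eq, norm_mul]
      _ ≤ B := hB w hw
  have B_nonneg : 0 ≤ B :=
    (norm_nonneg _).trans (hB (7 * r : ℝ) (Complex.norm_of_nonneg (by positivity)))
  calc ‖f z‖ = ‖∏ a ∈ s, (z - a) ^ T‖ * ‖g z‖ := by rw [f_eq, norm_mul]
    _ ≤ (2 * r) ^ (#s * T) * (B / (6 * r) ^ (#s * T)) := by gcongr
    _ = B * 3⁻¹ ^ (#s * T) := by
      rw [show 6 * r = 3 * (2 * r) by ring, mul_pow 3, inv_pow]
      field_simp
    _ ≤ B * (Real.exp 1)⁻¹ ^ (#s * T) := by gcongr; exact Real.exp_one_lt_three.le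
    _ = B * Real.exp (-(#s * T)) := by
      rw [← Real.exp_neg, ← Real.exp_nat_mul, Nat.cast_mul, mul_neg_one]

end EntireFunctions

/-! ### Exponential sums -/

section ExponentialSums

open Polynomial

variable {σ : Type*} [Fintype σ] {w Λ : σ → ℂ}

theorem iteratedDeriv_sum_mul_exp (w Λ : σ → ℂ) (k : ℕ) :
    iteratedDeriv k (fun z : ℂ => ∑ s, w s * Complex.exp (z * Λ s)) =
      fun z => ∑ s, w s * Λ s ^ k * Complex.exp (z * Λ s) := by
  induction k with
  | zero => simp
  | succ k ih =>
    rw [iteratedDeriv_succ, ih]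
    ext z
    refine (HasDerivAt.fun_sum fun s _ => ?_).deriv
    have h_exp := ((hasDerivAt_mul_const (Λ s)).cexp (x := z)).const_mul (w s * Λ s ^ k)
    convert! h_exp using 1
    ring

theorem sum_mul_eval_mul_eval_exp_eq_zero {h M : ℕ}
    (hv : ∀ l < h, ∀ k < M, ∑ s, w s * Λ s ^ k * Complex.exp (l * Λ s) = 0)
    {P R : ℂ[X]} (hP : P.natDegree < M) (hR : R.natDegree < h) :
    ∑ s, w s * P.eval (Λ s) * R.eval (Complex.exp (Λ s)) = 0 := by
  have expand (s : σ) : w s * P.eval (Λ s) * R.eval (Complex.exp (Λ s)) =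
      ∑ k ∈ range M, ∑ l ∈ range h, P.coeff k * R.coeff l *
        (w s * Λ s ^ k * Complex.exp (l * Λ s)) := by
    rw [eval_eq_sum_range' hP, eval_eq_sum_range' hR, mul_sum (range M), sum_mul_sum]
    refine sum_congr rfl fun k _ => sum_congr rfl fun l _ => ?_
    rw [Complex.exp_nat_mul]
    ring
  simp_rw [expand]
  rw [sum_comm]
  refine sum_eq_zero fun k hk => ?_
  rw [sum_comm]
  refine sum_eq_zero fun l hl => ?_
  rw [← mul_sum, hv l (mem_range.1 hl) k (mem_range.1 hk), mul_zero]

theorem eval_prod_X_sub_C_eq_zero_iff {s : Finset ℂ} {x : ℂ} :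
    (∏ a ∈ s, (X - C a)).eval x = 0 ↔ x ∈ s := by
  simp only [eval_prod, eval_sub, eval_X, eval_C, prod_eq_zero_iff, sub_eq_zero]
  exact ⟨fun ⟨_, ha, hx⟩ => hx ▸ ha, fun hx => ⟨x, hx, rfl⟩⟩

/-- Zero estimate: to isolate `w μ`, take for `P` the polynomial vanishing at the frequencies
`Λ s ≠ Λ μ` with `exp (Λ s) = exp (Λ μ)`, and for `R` the one vanishing at the other values of
`exp ∘ Λ`. -/
theorem eq_zero_of_sum_mul_pow_mul_exp_eq_zero (hΛ : Function.Injective Λ) {h M : ℕ}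
    (hv : ∀ l < h, ∀ k < M, ∑ s, w s * Λ s ^ k * Complex.exp (l * Λ s) = 0)
    (hh : Fintype.card σ ≤ h)
    (hM : ∀ μ, #{s | Complex.exp (Λ s) = Complex.exp (Λ μ)} ≤ M) :
    w = 0 := by
  classical
  ext μ
  set fiber : Finset ℂ := (univ.filter fun s => Complex.exp (Λ s) = Complex.exp (Λ μ)).image Λ
  set values : Finset ℂ := univ.image (fun s => Complex.exp (Λ s)) with values_def
  have mem_fiber : Λ μ ∈ fiber := mem_image_of_mem Λ (by simp)
  have mem_values (s : σ) : Complex.exp (Λ s) ∈ values := by simp [values_def]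
  have fiber_card : #(fiber.erase (Λ μ)) < M :=
    (card_erase_lt_of_mem mem_fiber).trans_le (card_image_le.trans (hM μ))
  have values_card : #(values.erase (Complex.exp (Λ μ))) < h :=
    (card_erase_lt_of_mem (mem_values μ)).trans_le (card_image_le.trans hh)
  have isolated := sum_mul_eval_mul_eval_exp_eq_zero hv
    (P := ∏ a ∈ fiber.erase (Λ μ), (X - C a))
    (R := ∏ a ∈ values.erase (Complex.exp (Λ μ)), (X - C a))
    (by rwa [natDegree_finsetProd_X_sub_C_eq_card])
    (by rwa [natDegree_finsetProd_X_sub_C_eq_card])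
  rw [sum_eq_single μ _ (by simp)] at isolated
  · simpa [eval_prod_X_sub_C_eq_zero_iff] using isolated
  · intro s _ hs
    by_cases h_exp : Complex.exp (Λ s) = Complex.exp (Λ μ)
    · rw [eval_prod_X_sub_C_eq_zero_iff.2, mul_zero, zero_mul]
      exact mem_erase.2 ⟨hΛ.ne hs, mem_image_of_mem Λ (by simpa using h_exp)⟩
    · rw [eval_prod_X_sub_C_eq_zero_iff.2 (mem_erase.2 ⟨h_exp, mem_values s⟩), mul_zero]

end ExponentialSums

/-! ### Liouville's inequality and Siegel's lemma -/

section NumberFields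

open NumberField

universe u v

variable {K : Type*} [Field K] [NumberField K]

theorem house_le_iff {x : K} {B : ℝ} : house x ≤ B ↔ ∀ σ : K →+* ℂ, ‖σ x‖ ≤ B := by
  refine ⟨fun h σ => (norm_embedding_le_house x σ).trans h, fun h => ?_⟩
  have B_nonneg : 0 ≤ B := (norm_nonneg _).trans (h (Classical.arbitrary _))
  rwa [house, pi_norm_le_iff_of_nonneg B_nonneg]

theorem one_le_norm_algebraNorm {x : 𝓞 K} (hx : x ≠ 0) : 1 ≤ ‖Algebra.norm ℚ (x : K)‖ := by
  have h_int : (1 : ℝ) ≤ |(Algebra.norm ℤ x : ℝ)| := by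
    exact_mod_cast Int.one_le_abs (Algebra.norm_ne_zero_iff.mpr hx)
  simpa [← Algebra.coe_norm_int, ← Rat.norm_cast_real] using h_int

theorem le_finrank_mul_of_norm_le_exp {x : 𝓞 K} (hx : x ≠ 0) {S E : ℝ}
    (hS : ∀ σ : K →+* ℂ, ‖σ x‖ ≤ Real.exp S) {φ : K →+* ℂ} (hφ : ‖φ x‖ ≤ Real.exp (S - E)) :
    E ≤ Module.finrank ℚ K * S := by
  have finrank_eq : ((Module.finrank ℚ K - 1 : ℕ) : ℝ) = Module.finrank ℚ K - 1 :=
    Nat.cast_pred Module.finrank_pos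
  have one_le : 1 ≤ Real.exp (Module.finrank ℚ K * S - E) := by
    calc 1 ≤ ‖Algebra.norm ℚ (x : K)‖ := one_le_norm_algebraNorm hx
      _ ≤ ‖φ x‖ * house (x : K) ^ (Module.finrank ℚ K - 1) :=
        norm_norm_le_norm_mul_house_pow (x : K) φ
      _ ≤ Real.exp (S - E) * Real.exp S ^ (Module.finrank ℚ K - 1) := by
        gcongr
        · exact pow_nonneg (house_nonneg _) _
        · exact house_nonneg _
        · exact house_le_iff.2 hS
      _ = Real.exp (Module.finrank ℚ K * S - E) := by
        rw [← Real.exp_nat_mul, ← Real.exp_add, finrank_eq]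
        ring_nf
  linarith [Real.one_le_exp_iff.1 one_le]

variable (K) in
theorem exists_forall_siegel : ∃ C : ℝ, 0 ≤ C ∧
    ∀ (R : Type u) (S : Type v) [Fintype R] [Fintype S] (a : Matrix R S (𝓞 K)) (E : ℝ),
      a ≠ 0 → Fintype.card S = 2 * Fintype.card R → (∀ k l, house (a k l : K) ≤ Real.exp E) →
      ∃ ξ : S → 𝓞 K, ξ ≠ 0 ∧ a.mulVec ξ = 0 ∧
        ∀ l, house (ξ l : K) ≤ Fintype.card S * Real.exp (C + E) := by
  classical
  obtain ⟨c, hc⟩ : ∃ c : ℝ, ∀ (R : Type u) (S : Type v) [Fintype R] [Fintype S]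
      (a : Matrix R S (𝓞 K)) (A : ℝ), a ≠ 0 → 0 < Fintype.card R →
      Fintype.card R < Fintype.card S → (∀ k l, house (a k l : K) ≤ A) →
      ∃ ξ : S → 𝓞 K, ξ ≠ 0 ∧ a.mulVec ξ = 0 ∧
        ∀ l, house (ξ l : K) ≤ c * (c * Fintype.card S * A) ^
          ((Fintype.card R : ℝ) / (Fintype.card S - Fintype.card R)) :=
    ⟨_, fun R S _ _ a A ha hR hRS hA =>
      house.exists_ne_zero_int_vec_house_le K a ha hR hRS rfl hA rfl⟩
  refine ⟨c ^ 2, sq_nonneg c, fun R S _ _ a E ha hRS hE => ?_⟩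
  have R_nonempty : Nonempty R := by
    by_contra h
    rw [not_nonempty_iff] at h
    exact ha (Subsingleton.elim _ _)
  have R_pos : 0 < Fintype.card R := Fintype.card_pos
  obtain ⟨ξ, ξ_ne, ξ_mul, ξ_le⟩ := hc R S a _ ha R_pos (by omega) hE
  have exponent_eq_one : (Fintype.card R : ℝ) / (Fintype.card S - Fintype.card R) = 1 := by
    rw [hRS, Nat.cast_mul, Nat.cast_ofNat, two_mul, add_sub_cancel_right]
    exact div_self (by positivity)
  simp only [exponent_eq_one, Real.rpow_one] at ξ_le
  refine ⟨ξ, ξ_ne, ξ_mul, fun l => (ξ_le l).trans ?_⟩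
  calc c * (c * Fintype.card S * Real.exp E)
      = Fintype.card S * (c ^ 2 * Real.exp E) := by ring
    _ ≤ Fintype.card S * (Real.exp (c ^ 2) * Real.exp E) := by
      gcongr
      linarith [Real.add_one_le_exp (c ^ 2)]
    _ = Fintype.card S * Real.exp (c ^ 2 + E) := by rw [Real.exp_add]

end NumberFields

/-! ### Baker's theorem -/

open NumberField in
/-- A linear relation `∑ coeff i * ℓ i = 0` between logarithms `ℓ i` of algebraic integers `α i`,
with algebraic integer coefficients. All the numbers involved lie in a field `K`, viewed inside `ℂ`
through `φ`, and `coeff pivot ≠ 0`, so that the relation can be solved for `ℓ pivot`. -/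
structure LogRelation (K ι : Type*) [Field K] [Fintype ι] where
  φ : K →+* ℂ
  α : ι → 𝓞 K
  ℓ : ι → ℂ
  coeff : ι → 𝓞 K
  pivot : ι
  exp_log : ∀ i, Complex.exp (ℓ i) = φ (α i)
  coeff_pivot_ne_zero : coeff pivot ≠ 0
  relation : ∑ i, φ (coeff i) * ℓ i = 0

namespace LogRelation

open NumberField

variable {K ι : Type*} [Field K] [Fintype ι] (r : LogRelation K ι) {L : ℕ}

/-- The coefficient of `ℓ i` in `coeff pivot * ∑ i, lam i * ℓ i` once `ℓ pivot` has been
eliminated. -/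
def form (lam : ι → Fin L) (i : ι) : 𝓞 K :=
  r.coeff r.pivot * (lam i : ℕ) - r.coeff i * (lam r.pivot : ℕ)

/-- The logarithm `∑ i, lam i * ℓ i` of `∏ i, α i ^ lam i`. -/
def logValue (lam : ι → Fin L) : ℂ := ∑ i, (lam i : ℕ) * r.ℓ i

/-- The contribution of `lam` to the value at `l` of the derivative of Baker's auxiliary function
indexed by `m`, up to powers of the logarithms. -/
def monomial (lam : ι → Fin L) (m : ι → ℕ) (l : ℕ) : 𝓞 K :=
  (∏ i, r.form lam i ^ m i) * ∏ i, r.α i ^ ((lam i : ℕ) * l)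

/-- The coefficients of the exponential sum with frequencies `logValue lam` whose value at `l`
is `φ (value p m l)`. -/
def weight (p : (ι → Fin L) → 𝓞 K) (m : ι → ℕ) (lam : ι → Fin L) : ℂ :=
  r.φ (p lam) * ∏ i, r.φ (r.form lam i) ^ m i

theorem map_coeff_pivot_mul_logValue (lam : ι → Fin L) :
    r.φ (r.coeff r.pivot) * r.logValue lam = ∑ i, r.φ (r.form lam i) * r.ℓ i := by
  have expand : ∑ i, r.φ (r.form lam i) * r.ℓ i =
      r.φ (r.coeff r.pivot) * r.logValue lam -
        (lam r.pivot : ℕ) * ∑ i, r.φ (r.coeff i) * r.ℓ i := by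
    rw [logValue, mul_sum, mul_sum, ← sum_sub_distrib]
    refine sum_congr rfl fun i _ => ?_
    simp only [form, map_sub, map_mul, map_natCast]
    ring
  rw [expand, r.relation, mul_zero, sub_zero]

section Bounds

variable [NumberField K]

/-- A constant such that all the quantities `form lam i` and `logValue lam` with `lam : ι → Fin L`
are bounded by `bound * L`. -/
noncomputable def bound : ℝ :=
  1 + house (r.coeff r.pivot : K) + ∑ i, house (r.coeff i : K) + ∑ i, ‖r.ℓ i‖ +
    ∑ i, house (r.α i : K)

theorem sum_house_nonneg (x : ι → 𝓞 K) : 0 ≤ ∑ i, house (x i : K) :=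
  sum_nonneg fun _ _ => house_nonneg _

theorem one_le_bound : 1 ≤ r.bound := by
  have := house_nonneg (r.coeff r.pivot : K)
  have := sum_house_nonneg r.coeff
  have := sum_house_nonneg r.α
  have : 0 ≤ ∑ i, ‖r.ℓ i‖ := sum_nonneg fun _ _ => norm_nonneg _
  rw [bound]
  linarith

theorem house_coeff_pivot_add_le_bound (i : ι) :
    house (r.coeff r.pivot : K) + house (r.coeff i : K) ≤ r.bound := by
  have := sum_house_nonneg r.α
  have : 0 ≤ ∑ i, ‖r.ℓ i‖ := sum_nonneg fun _ _ => norm_nonneg _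
  have := single_le_sum (f := fun i => house (r.coeff i : K)) (fun _ _ => house_nonneg _)
    (mem_univ i)
  rw [bound]
  linarith

theorem sum_norm_log_le_bound : ∑ i, ‖r.ℓ i‖ ≤ r.bound := by
  have := house_nonneg (r.coeff r.pivot : K)
  have := sum_house_nonneg r.coeff
  have := sum_house_nonneg r.α
  rw [bound]
  linarith

theorem sum_house_base_le_bound : ∑ i, house (r.α i : K) ≤ r.bound := by
  have := house_nonneg (r.coeff r.pivot : K)
  have := sum_house_nonneg r.coeff
  have : 0 ≤ ∑ i, ‖r.ℓ i‖ := sum_nonneg fun _ _ => norm_nonneg _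
  rw [bound]
  linarith

theorem one_le_bound_mul (lam : ι → Fin L) : 1 ≤ r.bound * L :=
  one_le_mul_of_one_le_of_one_le r.one_le_bound (by exact_mod_cast (lam r.pivot).pos)

theorem norm_form_le (σ : K →+* ℂ) (lam : ι → Fin L) (i : ι) :
    ‖σ (r.form lam i)‖ ≤ r.bound * L := by
  calc ‖σ (r.form lam i)‖
      ≤ ‖σ (r.coeff r.pivot)‖ * (lam i : ℕ) + ‖σ (r.coeff i)‖ * (lam r.pivot : ℕ) := by
        simpa [form] using norm_sub_le (σ (r.coeff r.pivot) * (lam i : ℕ))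
          (σ (r.coeff i) * (lam r.pivot : ℕ))
    _ ≤ house (r.coeff r.pivot : K) * L + house (r.coeff i : K) * L := by
        gcongr
        · exact house_nonneg _
        · exact norm_embedding_le_house _ σ
        · exact (lam i).2.le
        · exact house_nonneg _
        · exact norm_embedding_le_house _ σ
        · exact (lam r.pivot).2.le
    _ ≤ r.bound * L := by
        rw [← add_mul]
        gcongr
        exact r.house_coeff_pivot_add_le_bound i

theorem norm_logValue_le (lam : ι → Fin L) : ‖r.logValue lam‖ ≤ r.bound * L := by
  calc ‖r.logValue lam‖ ≤ ∑ i, ‖((lam i : ℕ) : ℂ) * r.ℓ i‖ := norm_sum_le _ _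
    _ ≤ ∑ i, ‖r.ℓ i‖ * L := by
        refine sum_le_sum fun i _ => ?_
        rw [norm_mul, mul_comm, Complex.norm_natCast]
        gcongr
        exact (lam i).2.le
    _ ≤ r.bound * L := by
        rw [← sum_mul]
        gcongr
        exact r.sum_norm_log_le_bound

theorem norm_prod_form_pow_le (σ : K →+* ℂ) (lam : ι → Fin L) {m : ι → ℕ} {M : ℕ}
    (hm : ∑ i, m i ≤ M) :
    ‖∏ i, σ (r.form lam i) ^ m i‖ ≤ Real.exp (M * Real.log (r.bound * L)) := by
  have one_le := r.one_le_bound_mul lam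
  calc ‖∏ i, σ (r.form lam i) ^ m i‖ ≤ ∏ i, (r.bound * L) ^ m i := by
        rw [norm_prod]
        refine prod_le_prod (fun _ _ => norm_nonneg _) fun i _ => ?_
        rw [norm_pow]
        gcongr
        exact r.norm_form_le σ lam i
    _ = (r.bound * L) ^ ∑ i, m i := prod_pow_eq_pow_sum ..
    _ ≤ (r.bound * L) ^ M := pow_le_pow_right₀ one_le hm
    _ = Real.exp (M * Real.log (r.bound * L)) := by
        rw [Real.exp_nat_mul, Real.exp_log (by linarith)]

theorem norm_prod_base_pow_le (σ : K →+* ℂ) (lam : ι → Fin L) (l : ℕ) :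
    ‖∏ i, σ (r.α i) ^ ((lam i : ℕ) * l)‖ ≤ Real.exp (r.bound * L * l) := by
  have factor_le (i : ι) :
      ‖σ (r.α i) ^ ((lam i : ℕ) * l)‖ ≤ Real.exp (house (r.α i : K) * L * l) := by
    have base_le : ‖σ (r.α i)‖ ≤ Real.exp (house (r.α i : K)) :=
      (norm_embedding_le_house _ σ).trans (by linarith [Real.add_one_le_exp (house (r.α i : K))])
    have lam_le : ((lam i : ℕ) : ℝ) ≤ L := by exact_mod_cast (lam i).2.le
    calc ‖σ (r.α i) ^ ((lam i : ℕ) * l)‖ ≤ Real.exp (house (r.α i : K)) ^ ((lam i : ℕ) * l) := by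
          rw [norm_pow]
          gcongr
      _ = Real.exp (house (r.α i : K) * (lam i : ℕ) * l) := by
          rw [← Real.exp_nat_mul, Nat.cast_mul]
          ring_nf
      _ ≤ Real.exp (house (r.α i : K) * L * l) := by
          gcongr
          exact house_nonneg _
  calc ‖∏ i, σ (r.α i) ^ ((lam i : ℕ) * l)‖ ≤ ∏ i, Real.exp (house (r.α i : K) * L * l) := by
        rw [norm_prod]
        exact prod_le_prod (fun _ _ => norm_nonneg _) fun i _ => factor_le i
    _ = Real.exp ((∑ i, house (r.α i : K)) * L * l) := by rw [← Real.exp_sum, sum_mul, sum_mul]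
    _ ≤ Real.exp (r.bound * L * l) := by
        gcongr
        exact r.sum_house_base_le_bound

theorem norm_monomial_le (σ : K →+* ℂ) (lam : ι → Fin L) {m : ι → ℕ} {M l h : ℕ}
    (hm : ∑ i, m i ≤ M) (hl : l ≤ h) :
    ‖σ (r.monomial lam m l)‖ ≤
      Real.exp (M * Real.log (r.bound * L) + r.bound * L * h) := by
  have bound_pos := zero_le_one.trans r.one_le_bound
  simp only [monomial, map_mul, map_prod, map_pow, norm_mul, Real.exp_add]
  gcongr
  · exact r.norm_prod_form_pow_le σ lam hm
  · refine (r.norm_prod_base_pow_le σ lam l).trans ?_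
    gcongr

end Bounds

variable [DecidableEq ι]

/-- The value at `l` of the derivative, indexed by `m`, of Baker's auxiliary function with
coefficients `p`, up to powers of the logarithms. -/
def value (p : (ι → Fin L) → 𝓞 K) (m : ι → ℕ) (l : ℕ) : 𝓞 K :=
  ∑ lam, p lam * r.monomial lam m l

/-- The auxiliary function with coefficients `p` vanishes at `0, …, h - 1` together with its
derivatives of order less than `M`. -/
def Vanishes (p : (ι → Fin L) → 𝓞 K) (M h : ℕ) : Prop :=
  ∀ l < h, ∀ m : ι → ℕ, ∑ i, m i < M → r.value p m l = 0

theorem map_value (p : (ι → Fin L) → 𝓞 K) (m : ι → ℕ) (l : ℕ) :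
    r.φ (r.value p m l) = ∑ lam, r.weight p m lam * Complex.exp (l * r.logValue lam) := by
  simp only [value, monomial, weight, logValue, map_sum, map_mul, map_prod, map_pow, mul_sum,
    Complex.exp_sum, ← r.exp_log, ← Complex.exp_nat_mul]
  refine sum_congr rfl fun lam _ => ?_
  rw [mul_assoc]
  congr 2
  refine prod_congr rfl fun i _ => ?_
  push_cast
  ring_nf

theorem weight_add_single (p : (ι → Fin L) → 𝓞 K) (m : ι → ℕ) (j : ι)
    (lam : ι → Fin L) :
    r.weight p (m + Pi.single j 1) lam = r.weight p m lam * r.φ (r.form lam j) := by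
  have single_prod : ∏ i, r.φ (r.form lam i) ^ (Pi.single j 1 : ι → ℕ) i = r.φ (r.form lam j) := by
    rw [prod_eq_single j] <;> simp +contextual
  simp only [weight, Pi.add_apply, pow_add, prod_mul_distrib, single_prod, mul_assoc]

theorem sum_weight_mul_logValue_pow_eq_zero {p : (ι → Fin L) → 𝓞 K} {M h l : ℕ}
    (hv : r.Vanishes p M h) (hl : l < h) {m : ι → ℕ} {k : ℕ} (hk : ∑ i, m i + k < M) :
    ∑ lam, r.weight p m lam * r.logValue lam ^ k * Complex.exp (l * r.logValue lam) = 0 := by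
  have coeff_ne : r.φ (r.coeff r.pivot) ≠ 0 :=
    (map_ne_zero r.φ).2 (RingOfIntegers.coe_ne_zero_iff.2 r.coeff_pivot_ne_zero)
  induction k generalizing m with
  | zero => simpa [map_value] using congrArg (fun x : 𝓞 K => r.φ x) (hv l hl m hk)
  | succ k ih =>
    refine (mul_eq_zero_iff_left coeff_ne).1 ?_
    have raise (lam : ι → Fin L) :
        r.φ (r.coeff r.pivot) *
            (r.weight p m lam * r.logValue lam ^ (k + 1) * Complex.exp (l * r.logValue lam)) =
          ∑ j, r.ℓ j * (r.weight p (m + Pi.single j 1) lam * r.logValue lam ^ k *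
            Complex.exp (l * r.logValue lam)) := by
      calc _ = r.weight p m lam * r.logValue lam ^ k * Complex.exp (l * r.logValue lam) *
            (r.φ (r.coeff r.pivot) * r.logValue lam) := by ring
        _ = _ := by
          rw [map_coeff_pivot_mul_logValue, mul_sum]
          refine sum_congr rfl fun j _ => ?_
          rw [weight_add_single]
          ring
    simp_rw [mul_sum, raise]
    rw [sum_comm]
    refine sum_eq_zero fun j _ => ?_
    rw [← mul_sum, ih, mul_zero]
    simp only [Pi.add_apply, sum_add_distrib, sum_pi_single', mem_univ, if_true]
    omega

variable [NumberField K]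

theorem norm_sum_le_exp {g : (ι → Fin L) → ℂ} {E : ℝ} (hg : ∀ lam, ‖g lam‖ ≤ Real.exp E) :
    ‖∑ lam, g lam‖ ≤ Real.exp (Fintype.card ι * Real.log (r.bound * L) + E) := by
  rcases Nat.eq_zero_or_pos L with rfl | L_pos
  · have : IsEmpty (ι → Fin 0) := ⟨fun lam => (lam r.pivot).elim0⟩
    simpa using Real.exp_nonneg _
  have L_le : (L : ℝ) ≤ r.bound * L := le_mul_of_one_le_left L.cast_nonneg r.one_le_bound
  have L_pos' : (0 : ℝ) < L := Nat.cast_pos.2 L_pos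
  calc ‖∑ lam, g lam‖ ≤ ∑ _lam : ι → Fin L, Real.exp E := norm_sum_le_of_le _ fun lam _ => hg lam
    _ = (L : ℝ) ^ Fintype.card ι * Real.exp E := by simp
    _ ≤ (r.bound * L) ^ Fintype.card ι * Real.exp E := by gcongr
    _ = Real.exp (Fintype.card ι * Real.log (r.bound * L) + E) := by
        rw [Real.exp_add, Real.exp_nat_mul, Real.exp_log (L_pos'.trans_le L_le)]

end LogRelation

namespace LogRelation

open NumberField

variable {K ι : Type*} [Field K] [Fintype ι] [DecidableEq ι] {r : LogRelation K ι} {L : ℕ}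
  {p : (ι → Fin L) → 𝓞 K}

theorem Vanishes.le_analyticOrderAt {M h : ℕ} (hv : r.Vanishes p (2 * M) h) {m : ι → ℕ}
    (hm : ∑ i, m i < M) {l : ℕ} (hl : l < h) :
    M ≤ analyticOrderAt
      (fun z : ℂ => ∑ lam, r.weight p m lam * Complex.exp (z * r.logValue lam)) l := by
  have h_diff : Differentiable ℂ
      (fun z : ℂ => ∑ lam, r.weight p m lam * Complex.exp (z * r.logValue lam)) := by fun_prop
  rw [natCast_le_analyticOrderAt_iff_iteratedDeriv_eq_zero (h_diff.analyticAt _)]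
  intro k hk
  rw [iteratedDeriv_sum_mul_exp]
  exact r.sum_weight_mul_logValue_pow_eq_zero hv hl (by omega)

variable [NumberField K]

theorem norm_sum_weight_mul_exp_le {Q : ℝ} (hp : ∀ lam, ∀ σ : K →+* ℂ, ‖σ (p lam)‖ ≤ Real.exp Q)
    {m : ι → ℕ} {M : ℕ} (hm : ∑ i, m i ≤ M) (z : ℂ) :
    ‖∑ lam, r.weight p m lam * Complex.exp (z * r.logValue lam)‖ ≤
      Real.exp (Fintype.card ι * Real.log (r.bound * L) +
        (Q + M * Real.log (r.bound * L) + ‖z‖ * (r.bound * L))) := by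
  refine r.norm_sum_le_exp fun lam => ?_
  rw [weight, norm_mul, norm_mul, Real.exp_add, Real.exp_add, Complex.norm_exp]
  gcongr
  · exact hp lam r.φ
  · exact r.norm_prod_form_pow_le r.φ lam hm
  · refine (Complex.re_le_norm _).trans ?_
    rw [norm_mul]
    gcongr
    exact r.norm_logValue_le lam

theorem norm_value_le {Q : ℝ} (hp : ∀ lam, ∀ σ : K →+* ℂ, ‖σ (p lam)‖ ≤ Real.exp Q)
    {m : ι → ℕ} {M l h : ℕ} (hm : ∑ i, m i ≤ M) (hl : l ≤ h) (σ : K →+* ℂ) :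
    ‖σ (r.value p m l)‖ ≤ Real.exp (Fintype.card ι * Real.log (r.bound * L) +
      (Q + (M * Real.log (r.bound * L) + r.bound * L * h))) := by
  simp only [value, map_sum, map_mul]
  refine r.norm_sum_le_exp fun lam => ?_
  rw [norm_mul, Real.exp_add]
  gcongr
  · exact hp lam σ
  · exact r.norm_monomial_le σ lam hm hl

/-- The extrapolation step: by the Schwarz lemma the values of the auxiliary function on the longer
range `l < h'` are too small for Liouville's inequality, unless they vanish. -/
theorem Vanishes.extrapolate {Q : ℝ} (hp : ∀ lam, ∀ σ : K →+* ℂ, ‖σ (p lam)‖ ≤ Real.exp Q)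
    {M h h' : ℕ} (hh : h ≤ h') (hv : r.Vanishes p (2 * M) h)
    (h_small : Module.finrank ℚ K * (Fintype.card ι * Real.log (r.bound * L) +
      (Q + M * Real.log (r.bound * L) + 7 * h' * (r.bound * L))) < h * M) :
    r.Vanishes p M h' := by
  intro l hl m hm
  by_contra h_ne
  refine h_small.not_ge (le_finrank_mul_of_norm_le_exp h_ne (fun σ => ?_) (φ := r.φ) ?_)
  · refine (norm_value_le hp hm.le hl.le σ).trans (Real.exp_le_exp.2 ?_)
    have : 0 ≤ h' * (r.bound * L) := by have := r.one_le_bound; positivity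
    linarith
  · have h'_pos : 0 < h' := by omega
    have norm_le {k : ℕ} (hk : k < h') : ‖(k : ℂ)‖ ≤ h' := by simpa using hk.le
    have card_image : #((range h).image (Nat.cast : ℕ → ℂ)) = h := by
      rw [card_image_of_injective _ Nat.cast_injective, card_range]
    rw [map_value, sub_eq_add_neg, Real.exp_add, ← card_image]
    refine norm_le_mul_exp_neg_of_le_analyticOrderAt
      (f := fun z => ∑ lam, r.weight p m lam * Complex.exp (z * r.logValue lam))
      (by fun_prop) ?_ (Nat.cast_pos.2 h'_pos) ?_ (fun z hz => ?_) (norm_le hl)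
    · exact forall_mem_image.2 fun k hk => hv.le_analyticOrderAt hm (mem_range.1 hk)
    · exact forall_mem_image.2 fun k hk => norm_le ((mem_range.1 hk).trans_le hh)
    · exact hz ▸ norm_sum_weight_mul_exp_le hp hm.le z

theorem Vanishes.iterate {Q : ℝ} (hp : ∀ lam, ∀ σ : K →+* ℂ, ‖σ (p lam)‖ ≤ Real.exp Q)
    {J M N h : ℕ} (hN : 0 < N) (hL : 0 < L) (hv : r.Vanishes p (2 ^ J * M) h)
    (h_start : Module.finrank ℚ K * (Fintype.card ι * Real.log (r.bound * L) +
      (Q + 2 ^ J * M * Real.log (r.bound * L))) < h * M / 2)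
    (h_step : Module.finrank ℚ K * (7 * N * (r.bound * L)) ≤ M / 2) :
    r.Vanishes p M (N ^ J * h) := by
  induction J generalizing h with
  | zero => simpa using hv
  | succ J ih =>
    have log_nonneg : 0 ≤ Real.log (r.bound * L) :=
      Real.log_nonneg (r.one_le_bound_mul fun _ => ⟨0, hL⟩)
    have pow_le : (2 : ℝ) ^ J * M * Real.log (r.bound * L) ≤
        2 ^ (J + 1) * M * Real.log (r.bound * L) := by
      gcongr
      · norm_num
      · omega
    have h_start' : Module.finrank ℚ K * (Fintype.card ι * Real.log (r.bound * L) +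
        (Q + 2 ^ J * M * Real.log (r.bound * L))) < h * M / 2 := by
      refine lt_of_le_of_lt ?_ h_start
      gcongr
    have h_le : h ≤ N * h := Nat.le_mul_of_pos_left h hN
    have next : r.Vanishes p (2 ^ J * M) (N * h) := by
      refine Vanishes.extrapolate hp h_le (by rwa [← mul_assoc, ← pow_succ']) ?_
      have step_mul := mul_le_mul_of_nonneg_right h_step h.cast_nonneg
      have M_le : (h : ℝ) * M ≤ h * (2 ^ J * M) := by
        gcongr
        exact le_mul_of_one_le_left M.cast_nonneg (one_le_pow₀ one_le_two)
      push_cast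
      linarith
    rw [pow_succ, mul_assoc]
    refine ih next (h_start'.trans_le ?_)
    gcongr

end LogRelation

theorem exists_nat_ge_and_add_mul_log_lt_sq (x a b : ℝ) :
    ∃ w : ℕ, 0 < w ∧ x ≤ w ∧ a + b * Real.log w < (w : ℝ) ^ 2 := by
  obtain ⟨w, hw⟩ := exists_nat_ge (max x (|a| + |b| + 1))
  have x_le : x ≤ w := (le_max_left _ _).trans hw
  have sum_le : |a| + |b| + 1 ≤ w := (le_max_right _ _).trans hw
  have one_le : (1 : ℝ) ≤ w := by linarith [abs_nonneg a, abs_nonneg b]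
  refine ⟨w, by exact_mod_cast one_le, x_le, ?_⟩
  calc a + b * Real.log w ≤ |a| * w + |b| * w := by
        gcongr
        · exact (le_abs_self a).trans (le_mul_of_one_le_right (abs_nonneg a) one_le)
        · exact le_abs_self b
        · exact Real.log_le_self (by linarith)
    _ < w ^ 2 := by nlinarith

namespace LogRelation

open NumberField

variable {K ι : Type*} [Field K] [Fintype ι] (r : LogRelation K ι)

theorem logValue_injective (hℓ : LinearIndependent ℚ r.ℓ) (L : ℕ) :
    Function.Injective (r.logValue : (ι → Fin L) → ℂ) := by
  intro x y hxy
  have coeff_zero := Fintype.linearIndependent_iff.1 hℓ (fun i => (x i : ℚ) - (y i : ℚ)) <| by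
    simpa [logValue, Rat.smul_def, sub_mul, sum_sub_distrib, sub_eq_zero] using hxy
  funext i
  exact Fin.ext (by exact_mod_cast sub_eq_zero.1 (coeff_zero i))

section Indices

variable [DecidableEq ι]

/-- Extension by zero of a multi-index that is not defined at `pivot`, bounded by `M`. -/
def extendIndex {M : ℕ} (m : {i : ι // i ≠ r.pivot} → Fin M) (i : ι) : ℕ :=
  if hi : i ≠ r.pivot then m ⟨i, hi⟩ else 0

theorem sum_extendIndex_le {M : ℕ} (m : {i : ι // i ≠ r.pivot} → Fin M) :
    ∑ i, r.extendIndex m i ≤ Fintype.card ι * M := by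
  rw [← smul_eq_mul, ← card_univ]
  refine sum_le_card_nsmul _ _ _ fun i _ => ?_
  rw [extendIndex]
  split_ifs with hi
  · exact (m ⟨i, hi⟩).2.le
  · exact M.zero_le

/-- Because `form lam pivot = 0`, only multi-indices vanishing at `pivot` impose a condition. -/
theorem vanishes_of_forall_extendIndex {L : ℕ} {p : (ι → Fin L) → 𝓞 K} {M h : ℕ}
    (hv : ∀ (m : {i : ι // i ≠ r.pivot} → Fin M) (l : Fin h),
      r.value p (r.extendIndex m) l = 0) :
    r.Vanishes p M h := by
  intro l hl m hm
  by_cases m_pivot : m r.pivot = 0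
  · have lt_M (i : ι) : m i < M := (single_le_sum_of_canonicallyOrdered (mem_univ i)).trans_lt hm
    have extend_eq : r.extendIndex (fun i => ⟨m i, lt_M i⟩) = m := by
      funext i
      by_cases hi : i = r.pivot
      · simp [extendIndex, hi, m_pivot]
      · simp [extendIndex, hi]
    simpa only [extend_eq] using hv (fun i => ⟨m i, lt_M i⟩) ⟨l, hl⟩
  · refine Finset.sum_eq_zero fun lam _ => ?_
    rw [monomial, prod_eq_zero (mem_univ r.pivot), zero_mul, mul_zero]
    simp [form, m_pivot]

end Indices

variable [NumberField K] {L : ℕ}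

theorem abs_le_of_logValue_eq_add {x y : ι → Fin L} {k : ℤ}
    (hk : r.logValue x = r.logValue y + k * (2 * Real.pi * Complex.I)) :
    |(k : ℝ)| ≤ r.bound * L := by
  have norm_eq : ‖(k : ℂ) * (2 * Real.pi * Complex.I)‖ = |(k : ℝ)| * (2 * Real.pi) := by
    simp [abs_of_pos Real.pi_pos]
  have norm_le : |(k : ℝ)| * (2 * Real.pi) ≤ r.bound * L + r.bound * L := by
    rw [← norm_eq, eq_sub_of_add_eq' hk.symm]
    exact (norm_sub_le _ _).trans (add_le_add (r.norm_logValue_le x) (r.norm_logValue_le y))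
  nlinarith [Real.pi_gt_three, abs_nonneg (k : ℝ)]

variable [DecidableEq ι]

/-- Two logarithms with the same exponential differ by `2 * π * I * k`, and only
`|k| ≤ bound * L` can occur. -/
theorem card_exp_logValue_eq_le (hℓ : LinearIndependent ℚ r.ℓ) (μ : ι → Fin L) :
    #{lam : ι → Fin L | Complex.exp (r.logValue lam) = Complex.exp (r.logValue μ)} ≤
      3 * (r.bound * L) := by
  choose! k hk using fun lam : ι → Fin L =>
    (Complex.exp_eq_exp_iff_exists_int (x := r.logValue lam) (y := r.logValue μ)).1
  have card_le : #{lam : ι → Fin L | Complex.exp (r.logValue lam) = Complex.exp (r.logValue μ)} ≤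
      #(Icc (-(⌊r.bound * L⌋₊ : ℤ)) ⌊r.bound * L⌋₊) := by
    refine card_le_card_of_injOn k (fun lam hlam => ?_) fun x hx y hy hxy => ?_
    · have abs_le := r.abs_le_of_logValue_eq_add (hk lam (by simpa using hlam))
      have natAbs_le : (k lam).natAbs ≤ ⌊r.bound * L⌋₊ :=
        Nat.le_floor (by rwa [Nat.cast_natAbs, Int.cast_abs])
      simp only [coe_Icc, Set.mem_Icc]
      omega
    · refine r.logValue_injective hℓ L ?_
      rw [hk x (by simpa using hx), hk y (by simpa using hy), hxy]
  have card_Icc : #(Icc (-(⌊r.bound * L⌋₊ : ℤ)) ⌊r.bound * L⌋₊) = 2 * ⌊r.bound * L⌋₊ + 1 := by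
    rw [Int.card_Icc]
    omega
  have one_le := r.one_le_bound_mul μ
  have floor_le : (⌊r.bound * L⌋₊ : ℝ) ≤ r.bound * L := Nat.floor_le (by linarith)
  calc (#{lam : ι → Fin L | Complex.exp (r.logValue lam) = Complex.exp (r.logValue μ)} : ℝ)
      ≤ 2 * ⌊r.bound * L⌋₊ + 1 := by exact_mod_cast card_le.trans_eq card_Icc
    _ ≤ 3 * (r.bound * L) := by linarith

theorem exists_vanishes : ∃ C : ℝ, 0 ≤ C ∧ ∀ L M h : ℕ, 0 < L → 0 < M → 0 < h →
    L ^ Fintype.card ι = 2 * (M ^ (Fintype.card ι - 1) * h) →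
    ∃ p : (ι → Fin L) → 𝓞 K, p ≠ 0 ∧ r.Vanishes p M h ∧
      ∀ lam, ∀ σ : K →+* ℂ, ‖σ (p lam)‖ ≤
        Real.exp (Fintype.card ι * Real.log (r.bound * L) +
          (C + (Fintype.card ι * M * Real.log (r.bound * L) + r.bound * L * h))) := by
  obtain ⟨C, C_nonneg, siegel⟩ := exists_forall_siegel K
  refine ⟨C, C_nonneg, fun L M h hL hM hh h_count => ?_⟩
  let a : Matrix (({i // i ≠ r.pivot} → Fin M) × Fin h) (ι → Fin L) (𝓞 K) :=
    fun k lam => r.monomial lam (r.extendIndex k.1) k.2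
  have a_ne_zero : a ≠ 0 := fun h_zero => by
    have := congrFun₂ h_zero (fun _ => ⟨0, hM⟩, ⟨0, hh⟩) (fun _ => ⟨0, hL⟩)
    simp [a, monomial, extendIndex] at this
  obtain ⟨p, p_ne, p_mul, p_le⟩ := siegel _ _ a
    (Fintype.card ι * M * Real.log (r.bound * L) + r.bound * L * h) a_ne_zero (by simp [h_count])
    fun k lam => house_le_iff.2 fun σ => by
      simpa using r.norm_monomial_le σ lam (r.sum_extendIndex_le k.1) k.2.2.le
  refine ⟨p, p_ne, r.vanishes_of_forall_extendIndex fun m l => ?_, fun lam σ => ?_⟩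
  · simpa [Matrix.mulVec, dotProduct, a, value, mul_comm] using congrFun p_mul (m, l)
  · have L_pos : (0 : ℝ) < L := Nat.cast_pos.2 hL
    have L_le : (L : ℝ) ≤ r.bound * L := le_mul_of_one_le_left L.cast_nonneg r.one_le_bound
    refine (norm_embedding_le_house _ σ).trans ((p_le lam).trans ?_)
    rw [Real.exp_add (_ * Real.log _), Real.exp_nat_mul, Real.exp_log (L_pos.trans_le L_le)]
    gcongr
    simpa using pow_le_pow_left₀ L_pos.le L_le (Fintype.card ι)

theorem eq_zero_of_vanishes (hℓ : LinearIndependent ℚ r.ℓ) {p : (ι → Fin L) → 𝓞 K} {M h : ℕ}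
    (hv : r.Vanishes p M h) (hh : L ^ Fintype.card ι ≤ h) (hM : 3 * (r.bound * L) ≤ M) :
    p = 0 := by
  have map_zero := eq_zero_of_sum_mul_pow_mul_exp_eq_zero (w := r.weight p 0)
    (r.logValue_injective hℓ L) (h := h) (M := M)
    (fun l hl k hk => r.sum_weight_mul_logValue_pow_eq_zero hv hl (by simpa using hk))
    (by simpa using hh)
    (fun μ => by exact_mod_cast (r.card_exp_logValue_eq_le hℓ μ).trans hM)
  funext lam
  simpa [weight] using congrFun map_zero lam

end LogRelation

theorem exists_baker_parameter (n D J : ℕ) {c : ℝ} (hc : 0 < c) (C : ℝ) :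
    ∃ w : ℕ, 0 < w ∧ 14 * D * c ≤ w ∧ 3 * c ≤ 2 ^ J * (w : ℝ) ^ 2 ∧
      2 * D * ((3 * n + 1) * Real.log (c * (2 * (2 ^ J * w) ^ (2 * n))) + c + C) <
        2 ^ J * (w : ℝ) ^ 2 := by
  set A := Real.log (c * (2 * (2 ^ J) ^ (2 * n)))
  obtain ⟨w, w_pos, w_ge, w_sq⟩ := exists_nat_ge_and_add_mul_log_lt_sq (max (14 * D * c) (3 * c))
    (2 * D * ((3 * n + 1) * A + c + C)) (2 * D * ((3 * n + 1) * (2 * n)))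
  have sq_le : (w : ℝ) ^ 2 ≤ 2 ^ J * w ^ 2 :=
    le_mul_of_one_le_left (by positivity) (one_le_pow₀ one_le_two)
  have le_sq : (w : ℝ) ≤ w ^ 2 := by exact_mod_cast Nat.le_self_pow two_ne_zero w
  refine ⟨w, w_pos, (le_max_left _ _).trans w_ge,
    ((le_max_right _ _).trans w_ge).trans (le_sq.trans sq_le), lt_of_lt_of_le ?_ sq_le⟩
  have log_eq : Real.log (c * (2 * (2 ^ J * w) ^ (2 * n))) = A + 2 * n * Real.log w := by
    rw [show c * (2 * (2 ^ J * (w : ℝ)) ^ (2 * n)) = c * (2 * (2 ^ J) ^ (2 * n)) * w ^ (2 * n) by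
      ring, Real.log_mul (by positivity) (by positivity), Real.log_pow]
    push_cast
    rfl
  rw [log_eq]
  linarith

theorem baker_start_inequality {n D G C c T x : ℝ} (hn : 0 ≤ n) (hD : 0 ≤ D) (hG : 0 ≤ G)
    (hC : 0 ≤ C) (hT : 1 ≤ T) (hx : 2 * D * ((3 * n + 1) * G + c + C) < x) :
    D * (n * G + (n * G + (C + (n * T * G + c * T)) + T * G)) < T * x / 2 := by
  have nG_le : n * G ≤ T * (n * G) := le_mul_of_one_le_left (by positivity) hT
  have C_le : C ≤ T * C := le_mul_of_one_le_left hC hT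
  calc D * (n * G + (n * G + (C + (n * T * G + c * T)) + T * G))
      ≤ D * (T * ((3 * n + 1) * G + c + C)) := by gcongr; linarith
    _ = T * (2 * D * ((3 * n + 1) * G + c + C)) / 2 := by ring
    _ < T * x / 2 := by gcongr

theorem two_mul_pow_pow_le {n N : ℕ} (hN : 2 ≤ N) :
    (2 * N ^ (2 * n)) ^ n ≤ N ^ (2 * n ^ 2 + n) * N ^ 2 := by
  calc (2 * N ^ (2 * n)) ^ n = 2 ^ n * N ^ (2 * n ^ 2) := by ring
    _ ≤ N ^ n * N ^ (2 * n ^ 2) := by gcongr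
    _ ≤ N ^ n * N ^ (2 * n ^ 2) * N ^ 2 := Nat.le_mul_of_pos_right _ (by positivity)
    _ = N ^ (2 * n ^ 2 + n) * N ^ 2 := by ring

theorem siegel_count {n N : ℕ} (hn : 0 < n) :
    (2 * N ^ (2 * n)) ^ n = 2 * ((2 * N ^ (2 * n) * N ^ 2) ^ (n - 1) * N ^ 2) := by
  obtain ⟨k, rfl⟩ := Nat.exists_eq_succ_of_ne_zero hn.ne'
  rw [Nat.succ_sub_one, Nat.succ_eq_add_one]
  ring

theorem baker_step_inequality {D c w : ℝ} (hDc : 14 * D * c ≤ w) (J L : ℕ) (hw : 0 ≤ w) :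
    D * (7 * (2 ^ J * w) * (c * L)) ≤ L * (2 ^ J * w ^ 2) / 2 := by
  calc D * (7 * (2 ^ J * w) * (c * L)) = L * (2 ^ J * w * (14 * D * c)) / 2 := by ring
    _ ≤ L * (2 ^ J * w * w) / 2 := by gcongr
    _ = L * (2 ^ J * w ^ 2) / 2 := by ring

namespace LogRelation

open NumberField

variable {K ι : Type*} [Field K] [NumberField K] [Fintype ι]

/-- With `n` logarithms, the auxiliary function has `L ^ n` coefficients, `L = 2 * N ^ (2 * n)`.
Siegel's lemma makes it vanish to order `L * N ^ 2` at the integers below `N ^ 2`, and `J`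
extrapolations, each of them halving the order and multiplying the range by `N`, make it vanish at
more than `L ^ n` integers. -/
theorem exists_ne_zero_vanishes [DecidableEq ι] (r : LogRelation K ι) :
    ∃ (L M h : ℕ) (p : (ι → Fin L) → 𝓞 K), p ≠ 0 ∧ r.Vanishes p M h ∧
      L ^ Fintype.card ι ≤ h ∧ 3 * (r.bound * L) ≤ M := by
  obtain ⟨C, C_nonneg, construct⟩ := r.exists_vanishes
  set n := Fintype.card ι
  set D := Module.finrank ℚ K
  set J := 2 * n ^ 2 + n with J_def
  have n_pos : 0 < n := Fintype.card_pos_iff.2 ⟨r.pivot⟩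
  obtain ⟨w, w_pos, w_ge_D, w_ge, w_sq⟩ :=
    exists_baker_parameter n D J (zero_lt_one.trans_le r.one_le_bound) C
  obtain ⟨N, N_def⟩ : ∃ N, N = 2 ^ J * w := ⟨_, rfl⟩
  have N_pos : 0 < N := by rw [N_def]; positivity
  have N_ge : 2 ≤ N := by
    rw [N_def]
    exact (Nat.le_self_pow (by positivity) 2).trans (Nat.le_mul_of_pos_right _ w_pos)
  obtain ⟨L, L_def⟩ : ∃ L, L = 2 * N ^ (2 * n) := ⟨_, rfl⟩
  have L_pos : 0 < L := by rw [L_def]; positivity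
  obtain ⟨p, p_ne, hv, hp⟩ := construct L (L * N ^ 2) (N ^ 2) L_pos (by positivity) (by positivity)
    (by rw [L_def]; exact siegel_count n_pos)
  have order_eq : 2 ^ J * (L * (2 ^ J * w ^ 2)) = L * N ^ 2 := by rw [N_def]; ring
  refine ⟨L, L * (2 ^ J * w ^ 2), N ^ J * N ^ 2, p, p_ne, ?_, ?_, ?_⟩
  · refine Vanishes.iterate hp N_pos L_pos (by rwa [order_eq]) ?_ ?_
    · have start := baker_start_inequality (T := L * N ^ 2) (x := 2 ^ J * w ^ 2) n.cast_nonneg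
        D.cast_nonneg (Real.log_nonneg (r.one_le_bound_mul fun _ => ⟨0, L_pos⟩)) C_nonneg
        (by exact_mod_cast Nat.one_le_iff_ne_zero.2 (by positivity))
        (by simpa [L_def, N_def] using w_sq)
      have order_eq' : (2 : ℝ) ^ J * (L * (2 ^ J * w ^ 2)) = L * N ^ 2 := by exact_mod_cast order_eq
      push_cast
      rw [order_eq']
      convert start using 1 <;> ring
    · rw [N_def]
      push_cast
      exact baker_step_inequality w_ge_D J L w.cast_nonneg
  · rw [L_def, J_def]
    exact two_mul_pow_pow_le N_ge
  · push_cast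
    nlinarith [L.cast_nonneg (α := ℝ)]

theorem not_linearIndependent (r : LogRelation K ι) : ¬ LinearIndependent ℚ r.ℓ := by
  classical
  intro hℓ
  obtain ⟨L, M, h, p, p_ne, hv, hh, hM⟩ := r.exists_ne_zero_vanishes
  exact p_ne (r.eq_zero_of_vanishes hℓ hv hh hM)

end LogRelation

section Baker

open NumberField

variable {K ι : Type*} [Field K] [NumberField K] [Fintype ι] {φ : K →+* ℂ} {α : ι → 𝓞 K}
  {ℓ : ι → ℂ} {c : ι → K}

/-- Baker's theorem, for logarithms of algebraic integers. -/
theorem eq_zero_of_sum_map_mul_log_eq_zero (h_exp : ∀ i, Complex.exp (ℓ i) = φ (α i))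
    (hℓ : LinearIndependent ℚ ℓ) (h_rel : ∑ i, φ (c i) * ℓ i = 0) : c = 0 := by
  obtain ⟨d, hd⟩ :=
    IsLocalization.exist_integer_multiples_of_finite (nonZeroDivisors (𝓞 K)) c
  choose b hb using hd
  have b_eq (i : ι) : (b i : K) = (d : 𝓞 K) * c i := (hb i).trans (Algebra.smul_def _ _)
  have d_ne : ((d : 𝓞 K) : K) ≠ 0 := by exact_mod_cast nonZeroDivisors.coe_ne_zero d
  funext i
  by_contra c_ne
  refine LogRelation.not_linearIndependent ⟨φ, α, ℓ, b, i, h_exp, fun b_zero => ?_, ?_⟩ hℓ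
  · refine mul_ne_zero d_ne c_ne ?_
    rw [← b_eq, b_zero, RingOfIntegers.coe_eq_algebraMap, map_zero]
  · simp only [b_eq, map_mul, mul_assoc, ← mul_sum, h_rel, mul_zero]

/-- Over a `ℚ`-basis of the span of the logarithms, Baker's theorem turns the relation into a system
of equations in `K`, which can be conjugated. -/
theorem sum_map_mul_log_eq_zero_of_sum_map_mul_log_eq_zero
    (h_exp : ∀ i, Complex.exp (ℓ i) = φ (α i)) (h_rel : ∑ i, φ (c i) * ℓ i = 0) (τ : K →+* ℂ) :
    ∑ i, τ (c i) * ℓ i = 0 := by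
  obtain ⟨s, s_subset, span_eq, s_indep⟩ := exists_linearIndependent ℚ (Set.range ℓ)
  have : Fintype s := ((Set.finite_range ℓ).subset s_subset).fintype
  have exists_coord (i : ι) : ∃ x : s → ℚ, ∑ j, x j • (j : ℂ) = ℓ i := by
    refine (Submodule.mem_span_range_iff_exists_fun ℚ).1 ?_
    rw [Subtype.range_coe, span_eq]
    exact Submodule.subset_span ⟨i, rfl⟩
  choose x hx using exists_coord
  have exists_index (j : s) : ∃ i, ℓ i = j := s_subset j.2
  choose index h_index using exists_index
  have rewrite_basis (ψ : K →+* ℂ) :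
      ∑ i, ψ (c i) * ℓ i = ∑ j : s, ψ (∑ i, c i * (x i j : K)) * (j : ℂ) := by
    simp only [map_sum, map_mul, map_ratCast, sum_mul]
    rw [sum_comm]
    refine sum_congr rfl fun i _ => ?_
    rw [← hx i, mul_sum]
    exact sum_congr rfl fun j _ => by rw [Rat.smul_def, mul_assoc]
  have coord_zero := eq_zero_of_sum_map_mul_log_eq_zero (α := fun j => α (index j))
    (c := fun j => ∑ i, c i * (x i j : K)) (fun j => by rw [← h_index j, h_exp]) s_indep
    (by rw [← rewrite_basis, h_rel])
  rw [rewrite_basis]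
  exact sum_eq_zero fun j _ => by rw [congrFun coord_zero j, Pi.zero_apply, map_zero, zero_mul]

end Baker

/-! ### Periodic harmonic series as linear forms in logarithms -/

section PeriodicSeries

variable {q : ℕ} [NeZero q]

theorem stdAddChar_mul_natCast (a : ZMod q) (n : ℕ) :
    (ZMod.stdAddChar (a * (n : ZMod q)) : ℂ) = ZMod.stdAddChar a ^ n := by
  rw [← AddChar.map_nsmul_eq_pow, nsmul_eq_mul, mul_comm]

theorem norm_stdAddChar (a : ZMod q) : ‖(ZMod.stdAddChar a : ℂ)‖ = 1 := by
  rw [ZMod.stdAddChar_apply, Circle.norm_coe]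

theorem stdAddChar_eq_one_iff {a : ZMod q} : (ZMod.stdAddChar a : ℂ) = 1 ↔ a = 0 := by
  rw [← ZMod.injective_stdAddChar.eq_iff, AddChar.map_zero_eq_one]

theorem one_sub_mem_slitPlane {z : ℂ} (hz : ‖z‖ = 1) (hz_ne : z ≠ 1) :
    1 - z ∈ Complex.slitPlane := by
  refine Or.inl ?_
  have re_ne : z.re ≠ 1 := fun h => hz_ne <| by
    have im_eq : z.im = 0 := Complex.abs_re_eq_norm.1 (by rw [h, hz, abs_one])
    exact Complex.ext h im_eq
  have re_lt : z.re < 1 := (hz ▸ Complex.re_le_norm z).lt_of_ne re_ne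
  simpa using re_lt

theorem one_sub_stdAddChar_mem_slitPlane {a : ZMod q} (ha : a ≠ 0) :
    (1 - ZMod.stdAddChar a : ℂ) ∈ Complex.slitPlane :=
  one_sub_mem_slitPlane (norm_stdAddChar a) (stdAddChar_eq_one_iff.not.2 ha)

theorem hasSum_div_mul_pow (g : ZMod q → ℂ) {x : ℝ} (hx₀ : 0 ≤ x) (hx₁ : x < 1) :
    HasSum (fun n : ℕ => g n / n * (x : ℂ) ^ n)
      (-(q : ℂ)⁻¹ * ∑ a, ZMod.dft g a * Complex.log (1 - ZMod.stdAddChar a * x)) := by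
  have log_series (a : ZMod q) : HasSum (fun n : ℕ => (ZMod.stdAddChar a * (x : ℂ)) ^ n / n)
      (-Complex.log (1 - ZMod.stdAddChar a * x)) := by
    refine Complex.hasSum_taylorSeries_neg_log ?_
    rwa [norm_mul, norm_stdAddChar, one_mul, Complex.norm_real, Real.norm_of_nonneg hx₀]
  have sum_series :=
    (hasSum_sum (s := univ) fun a _ => (log_series a).mul_left (ZMod.dft g a)).mul_left (q : ℂ)⁻¹
  simp only [mul_neg, sum_neg_distrib] at sum_series
  rw [neg_mul]
  refine sum_series.congr_fun fun n => ?_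
  have inversion : g n = (q : ℂ)⁻¹ * ∑ a, ZMod.stdAddChar (a * (n : ZMod q)) * ZMod.dft g a := by
    simpa [smul_eq_mul] using ZMod.invDFT_apply (ZMod.dft g) n
  rw [inversion, mul_div_assoc, mul_assoc, sum_div, sum_mul]
  congr 1
  refine sum_congr rfl fun a _ => ?_
  rw [stdAddChar_mul_natCast, mul_pow]
  ring

theorem tendsto_sum_dft_mul_log (g : ZMod q → ℂ) {L : ℂ}
    (h : Tendsto (fun n => ∑ i ∈ range n, g i / (i : ℂ)) atTop (𝓝 L)) :
    Tendsto (fun x : ℝ => ∑ a, ZMod.dft g a * Complex.log (1 - ZMod.stdAddChar a * x))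
      (𝓝[<] 1) (𝓝 (-q * L)) := by
  have abel := Complex.tendsto_tsum_powerSeries_nhdsWithin_lt h
  rw [tendsto_map'_iff] at abel
  refine (abel.const_mul (-(q : ℂ))).congr' ?_
  filter_upwards [Ioo_mem_nhdsLT zero_lt_one] with x hx
  rw [Function.comp_apply, (hasSum_div_mul_pow g hx.1.le hx.2).tsum_eq, ← mul_assoc, neg_mul_neg,
    mul_inv_cancel₀ (NeZero.ne _), one_mul]

theorem tendsto_sum_erase_dft_mul_log (g : ZMod q → ℂ) :
    Tendsto (fun x : ℝ => ∑ a ∈ univ.erase (0 : ZMod q),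
      ZMod.dft g a * Complex.log (1 - ZMod.stdAddChar a * x)) (𝓝[<] 1)
      (𝓝 (∑ a, ZMod.dft g a * Complex.log (1 - ZMod.stdAddChar a))) := by
  have sum_erase_eq : ∑ a, ZMod.dft g a * Complex.log (1 - ZMod.stdAddChar a) =
      ∑ a ∈ univ.erase (0 : ZMod q), ZMod.dft g a * Complex.log (1 - ZMod.stdAddChar a) :=
    (sum_erase _ (by simp)).symm
  rw [sum_erase_eq]
  refine tendsto_finsetSum _ fun a ha => Tendsto.const_mul _ ?_
  have continuousAt_log :
      ContinuousAt (fun x : ℝ => Complex.log (1 - ZMod.stdAddChar a * x)) 1 := by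
    refine ContinuousAt.clog (by fun_prop) ?_
    simpa using one_sub_stdAddChar_mem_slitPlane (ne_of_mem_erase ha)
  simpa using continuousAt_log.tendsto.mono_left (nhdsWithin_le_nhds (s := Set.Iio 1))

theorem tendsto_norm_log_one_sub_atTop :
    Tendsto (fun x : ℝ => ‖Complex.log (1 - x)‖) (𝓝[<] 1) atTop := by
  have one_sub_tendsto : Tendsto (fun x : ℝ => 1 - x) (𝓝[<] 1) (𝓝[>] 0) := by
    refine tendsto_nhdsWithin_iff.2 ⟨?_, ?_⟩
    · have : ContinuousAt (fun x : ℝ => 1 - x) 1 := by fun_prop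
      simpa using this.tendsto.mono_left (nhdsWithin_le_nhds (s := Set.Iio 1))
    · filter_upwards [self_mem_nhdsWithin] with x hx using sub_pos.2 (Set.mem_Iio.1 hx)
  refine (tendsto_abs_atBot_atTop.comp
    (Real.tendsto_log_nhdsGT_zero.comp one_sub_tendsto)).congr' ?_
  filter_upwards [self_mem_nhdsWithin] with x hx
  have one_sub_nonneg : 0 ≤ 1 - x := (sub_pos.2 (Set.mem_Iio.1 hx)).le
  rw [← Complex.ofReal_one, ← Complex.ofReal_sub, ← Complex.ofReal_log one_sub_nonneg,
    Complex.norm_real, Real.norm_eq_abs, Function.comp_apply, Function.comp_apply]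

theorem dft_zero_eq_zero_of_tendsto (g : ZMod q → ℂ) {L : ℂ}
    (h : Tendsto (fun n => ∑ i ∈ range n, g i / (i : ℂ)) atTop (𝓝 L)) : ZMod.dft g 0 = 0 := by
  by_contra dft_ne
  have bounded := ((tendsto_sum_dft_mul_log g h).sub (tendsto_sum_erase_dft_mul_log g)).norm
  refine not_tendsto_nhds_of_tendsto_atTop
    (tendsto_norm_log_one_sub_atTop.const_mul_atTop (norm_pos_iff.2 dft_ne)) _
    (bounded.congr fun x => ?_)
  rw [← add_sum_erase univ _ (mem_univ (0 : ZMod q)), add_sub_cancel_right, norm_mul,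
    AddChar.map_zero_eq_one, one_mul]

theorem sum_dft_mul_log_eq_of_tendsto (g : ZMod q → ℂ) {L : ℂ}
    (h : Tendsto (fun n => ∑ i ∈ range n, g i / (i : ℂ)) atTop (𝓝 L)) :
    ∑ a, ZMod.dft g a * Complex.log (1 - ZMod.stdAddChar a) = -q * L := by
  refine tendsto_nhds_unique ((tendsto_sum_erase_dft_mul_log g).congr fun x => ?_)
    (tendsto_sum_dft_mul_log g h)
  exact sum_erase _ (by rw [dft_zero_eq_zero_of_tendsto g h, zero_mul])

theorem isPrimitiveRoot_stdAddChar (u : (ZMod q)ˣ) :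
    IsPrimitiveRoot (ZMod.stdAddChar (u : ZMod q) : ℂ) q := by
  refine ⟨?_, fun n hn => ?_⟩
  · rw [← stdAddChar_mul_natCast, ZMod.natCast_self, mul_zero, AddChar.map_zero_eq_one]
  · rwa [← stdAddChar_mul_natCast, stdAddChar_eq_one_iff, Units.mul_right_eq_zero,
      ZMod.natCast_eq_zero_iff] at hn

theorem exists_algHom_eq_stdAddChar {K : Type*} [Field K] [CharZero K]
    [IsCyclotomicExtension {q} ℚ K] {ζ : K} (hζ : IsPrimitiveRoot ζ q) (u : (ZMod q)ˣ) :
    ∃ φ : K →ₐ[ℚ] ℂ, φ ζ = ZMod.stdAddChar (u : ZMod q) := by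
  obtain ⟨φ, hφ⟩ := (hζ.embeddingsEquivPrimitiveRoots ℂ
      (Polynomial.cyclotomic.irreducible_rat (NeZero.pos q))).surjective
    ⟨_, (mem_primitiveRoots (NeZero.pos q)).2 (isPrimitiveRoot_stdAddChar u)⟩
  exact ⟨φ, congrArg Subtype.val hφ⟩

open NumberField in
/-- Conjugate the relation by the automorphism `ζ ↦ ζ ^ u` of the cyclotomic field. -/
theorem sum_dft_unit_mul_mul_log_eq_zero (g : ZMod q → ℚ) (u : (ZMod q)ˣ)
    (h : ∑ a, ZMod.dft (fun x => (g x : ℂ)) a * Complex.log (1 - ZMod.stdAddChar a) = 0) :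
    ∑ a, ZMod.dft (fun x => (g x : ℂ)) (u * a) * Complex.log (1 - ZMod.stdAddChar a) = 0 := by
  have : NeZero (q : ℚ) := NeZero.charZero
  let K := CyclotomicField q ℚ
  have : IsCyclotomicExtension {q} ℚ K := CyclotomicField.isCyclotomicExtension q ℚ
  have : NumberField K := IsCyclotomicExtension.numberField {q} ℚ K
  obtain ⟨ζ, hζ⟩ : ∃ ζ : K, IsPrimitiveRoot ζ q := ⟨_, IsCyclotomicExtension.zeta_spec q ℚ K⟩
  let ζ_int : 𝓞 K := ⟨ζ, hζ.isIntegral (NeZero.pos q)⟩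
  let c (a : ZMod q) : K := ∑ m, ζ ^ (-(m * a)).val * (g m : K)
  have map_zeta_pow {φ : K →ₐ[ℚ] ℂ} {v : (ZMod q)ˣ}
      (hφ : φ ζ = ZMod.stdAddChar (v : ZMod q)) (a : ZMod q) :
      φ (ζ ^ a.val) = ZMod.stdAddChar (v * a : ZMod q) := by
    rw [map_pow, hφ, ← stdAddChar_mul_natCast, ZMod.natCast_zmod_val]
  have map_c {φ : K →ₐ[ℚ] ℂ} {v : (ZMod q)ˣ}
      (hφ : φ ζ = ZMod.stdAddChar (v : ZMod q)) (a : ZMod q) :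
      φ (c a) = ZMod.dft (fun x => (g x : ℂ)) (v * a) := by
    simp only [c, map_sum, map_mul, map_ratCast, map_zeta_pow hφ, ZMod.dft_apply, smul_eq_mul]
    exact sum_congr rfl fun m _ => by rw [mul_neg, mul_left_comm]
  obtain ⟨φ, hφ⟩ := exists_algHom_eq_stdAddChar hζ (1 : (ZMod q)ˣ)
  obtain ⟨τ, hτ⟩ := exists_algHom_eq_stdAddChar hζ u
  have conjugated := sum_map_mul_log_eq_zero_of_sum_map_mul_log_eq_zero (φ := φ.toRingHom) (c := c)
    (α := fun a => if a = 0 then 1 else 1 - ζ_int ^ a.val)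
    (ℓ := fun a => Complex.log (1 - ZMod.stdAddChar a)) (fun a => ?_) ?_ τ.toRingHom
  · simpa only [AlgHom.toRingHom_eq_coe, RingHom.coe_coe, map_c hτ] using conjugated
  · split_ifs with ha
    · simp [ha]
    · rw [Complex.exp_log (Complex.slitPlane_ne_zero (one_sub_stdAddChar_mem_slitPlane ha))]
      have coe_zeta : algebraMap (𝓞 (K)) _ ζ_int = ζ := rfl
      simpa [coe_zeta] using (map_zeta_pow hφ a).symm
  · simpa only [AlgHom.toRingHom_eq_coe, RingHom.coe_coe, map_c hφ, Units.val_one, one_mul] using h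

end PeriodicSeries

/-! ### Dirichlet series with bounded partial sums -/

section BoundedPartialSums

open MeasureTheory

variable {c : ℕ → ℂ} {C : ℝ}

/-- The integral `∫ t in (1, ∞), A(t) / t ^ (s + 1)`, where `A` is the summatory function of `c`; by
Abel summation the Dirichlet series of `c` is `s` times this integral. -/
noncomputable def summatoryIntegral (c : ℕ → ℂ) (s : ℂ) : ℂ :=
  ∫ t in Set.Ioi (1 : ℝ), (∑ k ∈ Icc 1 ⌊t⌋₊, c k) * (t : ℂ) ^ (-(s + 1))

theorem norm_sum_mul_rpow_le (hc : ∀ n, ‖∑ k ∈ Icc 1 n, c k‖ ≤ C) {s t : ℝ} (hs : 1 ≤ s)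
    (ht : 1 ≤ t) : ‖(∑ k ∈ Icc 1 ⌊t⌋₊, c k) * (t : ℂ) ^ (-((s : ℂ) + 1))‖ ≤ C * t ^ (-2 : ℝ) := by
  have C_nonneg : 0 ≤ C := (norm_nonneg _).trans (hc 0)
  have norm_eq : ‖(t : ℂ) ^ (-((s : ℂ) + 1))‖ = t ^ (-(s + 1)) := by
    rw [Complex.norm_cpow_eq_rpow_re_of_pos (by linarith)]
    simp
  rw [norm_mul, norm_eq]
  gcongr
  · exact hc _
  · linarith

theorem integrableOn_rpow_neg_two : IntegrableOn (fun t : ℝ => C * t ^ (-2 : ℝ)) (Set.Ioi 1) :=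
  (integrableOn_Ioi_rpow_of_lt (by norm_num) zero_lt_one).const_mul C

theorem measurable_sum_Icc_floor_mul_cpow (c : ℕ → ℂ) (s : ℂ) :
    Measurable fun t : ℝ => (∑ k ∈ Icc 1 ⌊t⌋₊, c k) * (t : ℂ) ^ s :=
  ((measurable_from_nat (f := fun n => ∑ k ∈ Icc 1 n, c k)).comp Nat.measurable_floor).mul
    (by fun_prop)

theorem LSeries_eq_mul_summatoryIntegral (hc : ∀ n, ‖∑ k ∈ Icc 1 n, c k‖ ≤ C) {s : ℝ}
    (hs : 0 < s) (h_summable : LSeriesSummable c s) :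
    LSeries c s = s * summatoryIntegral c s := by
  refine LSeries_eq_mul_integral c le_rfl (by simpa using hs) h_summable ?_
  simp only [Real.rpow_zero]
  exact Asymptotics.isBigO_of_le' _ (c := C) fun n => by simpa using hc n

theorem tendsto_summatoryIntegral (hc : ∀ n, ‖∑ k ∈ Icc 1 n, c k‖ ≤ C) :
    Tendsto (fun s : ℝ => summatoryIntegral c s) (𝓝[>] 1) (𝓝 (summatoryIntegral c 1)) := by
  refine tendsto_integral_filter_of_dominated_convergence (fun t => C * t ^ (-2 : ℝ))
    (.of_forall fun s => (measurable_sum_Icc_floor_mul_cpow c _).aestronglyMeasurable) ?_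
    integrableOn_rpow_neg_two ?_
  · filter_upwards [self_mem_nhdsWithin] with s hs
    exact (ae_restrict_iff' measurableSet_Ioi).2
      (.of_forall fun t ht => norm_sum_mul_rpow_le hc hs.out.le ht.out.le)
  · refine (ae_restrict_iff' measurableSet_Ioi).2 (.of_forall fun t ht => ?_)
    have t_ne : (t : ℂ) ≠ 0 := by exact_mod_cast (zero_lt_one.trans ht.out).ne'
    have continuousAt_integrand :
        ContinuousAt (fun s : ℝ => (∑ k ∈ Icc 1 ⌊t⌋₊, c k) * (t : ℂ) ^ (-((s : ℂ) + 1))) 1 :=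
      continuousAt_const.mul (ContinuousAt.const_cpow (by fun_prop) (.inl t_ne))
    simpa using continuousAt_integrand.tendsto.mono_left (nhdsWithin_le_nhds (s := Set.Ioi 1))

theorem tendsto_LSeries_summatoryIntegral (hc : ∀ n, ‖∑ k ∈ Icc 1 n, c k‖ ≤ C)
    (h_summable : ∀ s : ℝ, 1 < s → LSeriesSummable c s) :
    Tendsto (fun s : ℝ => LSeries c s) (𝓝[>] 1) (𝓝 (summatoryIntegral c 1)) := by
  have s_tendsto : Tendsto (fun s : ℝ => (s : ℂ)) (𝓝[>] 1) (𝓝 1) :=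
    Complex.continuous_ofReal.continuousAt.tendsto.mono_left nhdsWithin_le_nhds
  have product_tendsto := s_tendsto.mul (tendsto_summatoryIntegral hc)
  rw [one_mul] at product_tendsto
  refine product_tendsto.congr' ?_
  filter_upwards [self_mem_nhdsWithin] with s hs
  exact (LSeries_eq_mul_summatoryIntegral hc (zero_lt_one.trans hs) (h_summable s hs)).symm

theorem tendsto_inv_mul_of_bounded {u : ℕ → ℂ} (hu : ∀ n, ‖u n‖ ≤ C) :
    Tendsto (fun n : ℕ => (n : ℂ)⁻¹ * u n) atTop (𝓝 0) :=
  (tendsto_inv_atTop_nhds_zero_nat (𝕜 := ℂ)).zero_mul_isBoundedUnder_le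
    (isBoundedUnder_of ⟨C, hu⟩)

theorem deriv_inv_ofReal {t : ℝ} (ht : t ≠ 0) :
    deriv (fun t : ℝ => (t : ℂ)⁻¹) t = -(t : ℂ) ^ (-(1 + 1 : ℂ)) := by
  have hasDerivAt_inv := (hasDerivAt_inv (Complex.ofReal_ne_zero.2 ht)).comp_ofReal
  rw [hasDerivAt_inv.deriv, Complex.cpow_neg, one_add_one_eq_two]
  norm_cast

theorem differentiableAt_inv_ofReal {t : ℝ} (ht : t ≠ 0) :
    DifferentiableAt ℝ (fun t : ℝ => (t : ℂ)⁻¹) t :=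
  (hasDerivAt_inv (Complex.ofReal_ne_zero.2 ht)).comp_ofReal.differentiableAt

theorem locallyIntegrableOn_deriv_inv_ofReal :
    LocallyIntegrableOn (deriv fun t : ℝ => (t : ℂ)⁻¹) (Set.Ici 1) := by
  refine ContinuousOn.locallyIntegrableOn ?_ measurableSet_Ici
  have deriv_eq : Set.EqOn (deriv fun t : ℝ => (t : ℂ)⁻¹) (fun t => -((t : ℂ) ^ 2)⁻¹) (Set.Ici 1) :=
    fun t ht => (hasDerivAt_inv (Complex.ofReal_ne_zero.2
      (zero_lt_one.trans_le ht.out).ne')).comp_ofReal.deriv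
  refine ContinuousOn.congr (fun t ht => ContinuousAt.continuousWithinAt ?_) deriv_eq
  have t_ne : (t : ℂ) ^ 2 ≠ 0 := pow_ne_zero 2 (Complex.ofReal_ne_zero.2
    (zero_lt_one.trans_le ht.out).ne')
  exact ((Complex.continuous_ofReal.pow 2).continuousAt.inv₀ t_ne).neg

theorem tendsto_sum_div_summatoryIntegral (hc : ∀ n, ‖∑ k ∈ Icc 1 n, c k‖ ≤ C) :
    Tendsto (fun n => ∑ k ∈ range n, c k / (k : ℂ)) atTop (𝓝 (summatoryIntegral c 1)) := by
  let c₀ := Function.update c 0 0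
  have sum_c₀ (n : ℕ) : ∑ k ∈ Icc 0 n, c₀ k = ∑ k ∈ Icc 1 n, c k := by
    rw [← add_sum_Ioc_eq_sum_Icc n.zero_le]
    simp only [c₀, Function.update_self, zero_add]
    exact sum_congr rfl fun k hk => Function.update_of_ne (mem_Ioc.1 hk).1.ne' 0 c
  have deriv_mul_eq {t : ℝ} (ht : 1 ≤ t) :
      deriv (fun t : ℝ => (t : ℂ)⁻¹) t * ∑ k ∈ Icc 0 ⌊t⌋₊, c₀ k =
        -((∑ k ∈ Icc 1 ⌊t⌋₊, c k) * (t : ℂ) ^ (-(1 + 1 : ℂ))) := by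
    rw [deriv_inv_ofReal (zero_lt_one.trans_le ht).ne', sum_c₀, neg_mul, mul_comm]
  have abel := tendsto_sum_mul_atTop_nhds_one_sub_integral₀ (𝕜 := ℂ) (c := c₀)
    (f := fun t : ℝ => (t : ℂ)⁻¹) (l := 0) (g := fun t => C * t ^ (-2 : ℝ))
    (Function.update_self ..) ?_ ?_ ?_ ?_ ?_
  · rw [zero_sub, setIntegral_congr_fun measurableSet_Ioi fun t ht => deriv_mul_eq (le_of_lt ht),
      integral_neg, neg_neg] at abel
    rw [← tendsto_add_atTop_iff_nat 1]
    refine abel.congr fun n => ?_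
    rw [range_eq_Ico, Ico_add_one_right_eq_Icc]
    refine sum_congr rfl fun k _ => ?_
    obtain rfl | hk := eq_or_ne k 0
    · simp
    · rw [show c₀ k = c k from Function.update_of_ne hk 0 c, div_eq_inv_mul, Complex.ofReal_natCast]
  · exact fun t ht => (differentiableAt_inv_ofReal (zero_lt_one.trans_le ht.out).ne')
  · exact locallyIntegrableOn_deriv_inv_ofReal
  · simpa only [sum_c₀, Complex.ofReal_natCast] using tendsto_inv_mul_of_bounded hc
  · refine Asymptotics.IsBigO.of_bound 1 ?_
    filter_upwards [eventually_ge_atTop 1] with t ht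
    rw [deriv_mul_eq ht, norm_neg, one_mul]
    exact (norm_sum_mul_rpow_le hc le_rfl ht).trans (le_abs_self _)
  · exact ⟨_, Ioi_mem_atTop 1, integrableOn_rpow_neg_two⟩

end BoundedPartialSums

section PeriodicDirichletSeries

variable {q : ℕ} [NeZero q]

theorem sum_range_natCast_zmod {M : Type*} [AddCommMonoid M] (g : ZMod q → M) :
    ∑ i ∈ range q, g (i : ZMod q) = ∑ x, g x :=
  sum_nbij' (fun i => (i : ZMod q)) ZMod.val (fun _ _ => mem_univ _)
    (fun x _ => mem_range.2 x.val_lt) (fun _ hi => ZMod.val_cast_of_lt (mem_range.1 hi))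
    (fun x _ => ZMod.natCast_zmod_val x) fun _ _ => rfl

theorem sum_Icc_natCast_zmod_periodic {g : ZMod q → ℂ} (hg : ∑ x, g x = 0) :
    Function.Periodic (fun n : ℕ => ∑ k ∈ Icc 1 n, g (k : ZMod q)) q := by
  intro n
  beta_reduce
  induction n with
  | zero =>
    rw [zero_add, ← Ico_add_one_right_eq_Icc, sum_Ico_eq_sum_range, Nat.add_sub_cancel]
    simp only [Nat.cast_add, Nat.cast_one]
    rw [sum_range_natCast_zmod fun x => g (1 + x)]
    simpa using (Equiv.sum_comp (Equiv.addLeft 1) g).trans hg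
  | succ n ih =>
    rw [add_right_comm, sum_Icc_succ_top (by omega), ih, sum_Icc_succ_top (by omega)]
    simp

theorem exists_norm_sum_Icc_le {g : ZMod q → ℂ} (hg : ∑ x, g x = 0) :
    ∃ C : ℝ, ∀ n : ℕ, ‖∑ k ∈ Icc 1 n, g (k : ZMod q)‖ ≤ C := by
  refine ⟨∑ m ∈ range q, ‖∑ k ∈ Icc 1 m, g (k : ZMod q)‖, fun n => ?_⟩
  rw [← (sum_Icc_natCast_zmod_periodic hg).map_mod_nat n]
  exact single_le_sum (f := fun m : ℕ => ‖∑ k ∈ Icc 1 m, g (k : ZMod q)‖) (fun _ _ => norm_nonneg _)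
    (mem_range.2 (Nat.mod_lt n (NeZero.pos q)))

theorem exists_tendsto_sum_div_and_LSeries {g : ZMod q → ℂ} (hg : ∑ x, g x = 0) :
    ∃ L : ℂ, Tendsto (fun n => ∑ i ∈ range n, g i / (i : ℂ)) atTop (𝓝 L) ∧
      Tendsto (fun s : ℝ => LSeries (fun n => g n) s) (𝓝[>] 1) (𝓝 L) := by
  obtain ⟨C, hC⟩ := exists_norm_sum_Icc_le hg
  exact ⟨_, tendsto_sum_div_summatoryIntegral hC, tendsto_LSeries_summatoryIntegral hC
    fun s hs => ZMod.LSeriesSummable_of_one_lt_re g (by simpa using hs)⟩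

theorem tendsto_LSeries_unit_mul {g : ZMod q → ℚ}
    (h : Tendsto (fun n => ∑ i ∈ range n, (g i : ℂ) / (i : ℂ)) atTop (𝓝 0)) (u : (ZMod q)ˣ) :
    Tendsto (fun s : ℝ => LSeries (fun n => (g (u * (n : ZMod q)) : ℂ)) s) (𝓝[>] 1) (𝓝 0) := by
  have sum_eq_zero : ∑ x, (g x : ℂ) = 0 := by
    simpa [ZMod.dft_apply_zero] using dft_zero_eq_zero_of_tendsto (fun x => (g x : ℂ)) h
  have sum_unit_mul : ∑ x : ZMod q, (g (u * x) : ℂ) = 0 :=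
    (Equiv.sum_comp (Units.mulLeft u) fun x => (g x : ℂ)).trans sum_eq_zero
  obtain ⟨L, sum_tendsto, series_tendsto⟩ := exists_tendsto_sum_div_and_LSeries sum_unit_mul
  have relation := sum_dft_mul_log_eq_of_tendsto (fun x => (g x : ℂ)) h
  have conjugated := sum_dft_unit_mul_mul_log_eq_zero g u⁻¹ (by simpa using relation)
  have L_eq := sum_dft_mul_log_eq_of_tendsto (fun x => (g ((u : ZMod q) * x) : ℂ)) sum_tendsto
  simp only [ZMod.dft_comp_unitMul (fun x => (g x : ℂ)) u, conjugated] at L_eq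
  have L_zero : L = 0 := by simpa [NeZero.ne q] using L_eq.symm
  rwa [← L_zero]

end PeriodicDirichletSeries

/-! ### Summing over integers composed of the primes dividing the modulus -/

section FactoredNumbers

open Nat (factoredNumbers)

theorem coprime_of_mem_factoredNumbers {q m k : ℕ} (hm : m ∈ factoredNumbers q.primeFactors)
    (hk : k.Coprime q) : m.Coprime k :=
  Nat.coprime_of_dvd fun p hp hpm hpk => hp.ne_one <| Nat.eq_one_of_dvd_coprimes hk hpk <|
    Nat.dvd_of_mem_primeFactors (Nat.mem_factoredNumbers'.1 hm p hp hpm)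

theorem injective_factoredNumbers_mul_coprime (q : ℕ) : Function.Injective
    fun x : factoredNumbers q.primeFactors × {k : ℕ | k.Coprime q} => (x.1 : ℕ) * (x.2 : ℕ) := by
  rintro ⟨⟨m, hm⟩, ⟨k, hk⟩⟩ ⟨⟨m', hm'⟩, ⟨k', hk'⟩⟩ (h : m * k = m' * k')
  obtain rfl : m = m' := Nat.dvd_antisymm
    ((coprime_of_mem_factoredNumbers hm hk').dvd_of_dvd_mul_right (h ▸ dvd_mul_right m k))
    ((coprime_of_mem_factoredNumbers hm' hk).dvd_of_dvd_mul_right (h ▸ dvd_mul_right m' k'))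
  obtain rfl : k = k' := Nat.eq_of_mul_eq_mul_left
    (Nat.pos_of_ne_zero (Nat.ne_zero_of_mem_factoredNumbers hm)) h
  rfl

theorem one_mem_factoredNumbers (S : Finset ℕ) : 1 ∈ factoredNumbers S :=
  Nat.mem_factoredNumbers'.2 fun _ hp h => absurd (Nat.dvd_one.1 h) hp.ne_one

theorem exists_mem_factoredNumbers_mul_coprime_eq {q : ℕ} (hq : q ≠ 0) {n : ℕ} (hn : n ≠ 0) :
    ∃ m ∈ factoredNumbers q.primeFactors, ∃ k, k.Coprime q ∧ m * k = n := by
  induction n using induction_on_primes with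
  | zero => exact absurd rfl hn
  | one => exact ⟨1, one_mem_factoredNumbers _, 1, Nat.coprime_one_left q, rfl⟩
  | prime_mul p a hp ih =>
    obtain ⟨m, hm, k, hk, rfl⟩ := ih (right_ne_zero_of_mul hn)
    by_cases hpq : p ∣ q
    · have p_mem : p ∈ factoredNumbers q.primeFactors := Nat.mem_factoredNumbers'.2 fun r hr h =>
        (Nat.prime_dvd_prime_iff_eq hr hp).1 h ▸ hp.mem_primeFactors hpq hq
      exact ⟨p * m, Nat.mul_mem_factoredNumbers p_mem hm, k, hk, mul_assoc p m k⟩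
    · exact ⟨m, hm, p * k, ((Nat.Prime.coprime_iff_not_dvd hp).2 hpq).mul_left hk,
        mul_left_comm m p k⟩

theorem LSeries_term_mul {c d : ℕ → ℂ} {m k : ℕ} (h : c (m * k) = c m * d k) (s : ℂ) :
    LSeries.term c s (m * k) = LSeries.term c s m * LSeries.term d s k := by
  simp only [LSeries.term_def, mul_eq_zero, h, Nat.cast_mul, Complex.natCast_mul_natCast_cpow]
  split_ifs <;> simp_all [mul_div_mul_comm]

theorem LSeries_eq_tsum_factoredNumbers_mul_LSeries {q : ℕ} (hq : q ≠ 0) {c d : ℕ → ℂ} {s : ℂ}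
    (hc : LSeriesSummable c s) (hd : LSeriesSummable d s)
    (d_eq_zero : ∀ k, ¬ k.Coprime q → d k = 0)
    (h_mul : ∀ m k, k.Coprime q → c (m * k) = c m * d k) :
    LSeries c s =
      (∑' m : factoredNumbers q.primeFactors, LSeries.term c s m) * LSeries d s := by
  have LSeries_d_eq : LSeries d s = ∑' k : {k : ℕ | k.Coprime q}, LSeries.term d s k := by
    refine (tsum_subtype_eq_of_support_subset fun k hk => ?_).symm
    contrapose! hk
    simp [LSeries.term_def, d_eq_zero k hk]
  have support_subset : Function.support (LSeries.term c s) ⊆ Set.range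
      fun x : factoredNumbers q.primeFactors × {k : ℕ | k.Coprime q} => (x.1 : ℕ) * (x.2 : ℕ) := by
    intro n hn
    have n_ne : n ≠ 0 := by
      rintro rfl
      exact hn (LSeries.term_zero c s)
    obtain ⟨m, hm, k, hk, h⟩ := exists_mem_factoredNumbers_mul_coprime_eq hq n_ne
    exact ⟨(⟨m, hm⟩, ⟨k, hk⟩), h⟩
  rw [LSeries_d_eq, tsum_mul_tsum_of_summable_norm (hc.norm.comp_injective Subtype.val_injective)
    (hd.norm.comp_injective Subtype.val_injective), LSeries,
    ← (injective_factoredNumbers_mul_coprime q).tsum_eq support_subset]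
  exact tsum_congr fun x => LSeries_term_mul (h_mul _ _ x.2.2) s

/-- Inversion `n ↦ 1 / n`, as the completely multiplicative function fed to Euler products. -/
noncomputable def natInv : ℕ →* ℝ where
  toFun n := (n : ℝ)⁻¹
  map_one' := by simp
  map_mul' m n := by rw [Nat.cast_mul, mul_inv]

theorem hasSum_inv_factoredNumbers (S : Finset ℕ) :
    HasSum (fun m : factoredNumbers S => ((m : ℕ) : ℝ)⁻¹)
      (∏ p ∈ S with p.Prime, (1 - (p : ℝ)⁻¹)⁻¹) := by
  have norm_natInv_lt {p : ℕ} (hp : p.Prime) : ‖natInv p‖ < 1 := by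
    simpa [natInv] using inv_lt_one_of_one_lt₀ (Nat.one_lt_cast.2 hp.one_lt : (1 : ℝ) < p)
  exact (EulerProduct.summable_and_hasSum_factoredNumbers_prod_filter_prime_geometric
    norm_natInv_lt S).2

theorem totient_eq_mul_prod_one_sub_inv (q : ℕ) :
    (q.totient : ℝ) = q * ∏ p ∈ q.primeFactors, (1 - (p : ℝ)⁻¹) := by
  simpa using congrArg (Rat.cast : ℚ → ℝ) (Nat.totient_eq_mul_prod_factors q)

theorem tsum_inv_factoredNumbers_primeFactors_mul_totient (q : ℕ) :
    (∑' m : factoredNumbers q.primeFactors, ((m : ℕ) : ℝ)⁻¹) * q.totient = q := by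
  have prod_ne : ∏ p ∈ q.primeFactors, (1 - (p : ℝ)⁻¹) ≠ 0 := prod_ne_zero_iff.2 fun p hp =>
    sub_ne_zero.2 (inv_lt_one_of_one_lt₀
      (Nat.one_lt_cast.2 (Nat.prime_of_mem_primeFactors hp).one_lt)).ne'
  rw [(hasSum_inv_factoredNumbers _).tsum_eq, totient_eq_mul_prod_one_sub_inv, prod_inv_distrib,
    filter_true_of_mem fun p => Nat.prime_of_mem_primeFactors, mul_left_comm,
    inv_mul_cancel₀ prod_ne, mul_one]

theorem norm_LSeries_term_le_of_norm_le {c : ℕ → ℂ} {C : ℝ} (hc : ∀ n, ‖c n‖ ≤ C) {s : ℝ}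
    (hs : 1 ≤ s) (n : ℕ) : ‖LSeries.term c s n‖ ≤ C * (n : ℝ)⁻¹ := by
  obtain rfl | hn := eq_or_ne n 0
  · simp
  have one_le_n : (1 : ℝ) ≤ n := by exact_mod_cast Nat.pos_of_ne_zero hn
  have n_le_rpow : (n : ℝ) ≤ (n : ℝ) ^ s := by
    simpa using Real.rpow_le_rpow_of_exponent_le one_le_n hs
  rw [LSeries.norm_term_eq, if_neg hn, Complex.ofReal_re, ← div_eq_mul_inv]
  have C_nonneg : 0 ≤ C := (norm_nonneg _).trans (hc n)
  gcongr
  exact hc n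

theorem summable_factoredNumbers_term_one {c : ℕ → ℂ} {C : ℝ} (hc : ∀ n, ‖c n‖ ≤ C)
    (S : Finset ℕ) : Summable fun m : factoredNumbers S => LSeries.term c 1 m :=
  .of_norm_bounded ((hasSum_inv_factoredNumbers S).summable.mul_left C) fun m => by
    simpa using norm_LSeries_term_le_of_norm_le hc (le_refl (1 : ℝ)) m

theorem tendsto_tsum_factoredNumbers_term {c : ℕ → ℂ} {C : ℝ} (hc : ∀ n, ‖c n‖ ≤ C)
    (S : Finset ℕ) :
    Tendsto (fun s : ℝ => ∑' m : factoredNumbers S, LSeries.term c s m) (𝓝[>] 1)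
      (𝓝 (∑' m : factoredNumbers S, LSeries.term c 1 m)) := by
  refine tendsto_tsum_of_dominated_convergence
    ((hasSum_inv_factoredNumbers S).summable.mul_left C) (fun m => ?_) ?_
  · have m_ne : (m : ℕ) ≠ 0 := Nat.ne_zero_of_mem_factoredNumbers m.2
    have cpow_ne : ((m : ℕ) : ℂ) ^ ((1 : ℝ) : ℂ) ≠ 0 := by simpa using m_ne
    have continuousAt_term : ContinuousAt (fun s : ℝ => c m / ((m : ℕ) : ℂ) ^ (s : ℂ)) 1 :=
      continuousAt_const.div (.const_cpow (by fun_prop) (.inl (Nat.cast_ne_zero.2 m_ne))) cpow_ne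
    simpa [LSeries.term_of_ne_zero m_ne] using
      continuousAt_term.tendsto.mono_left (nhdsWithin_le_nhds (s := Set.Ioi 1))
  · filter_upwards [self_mem_nhdsWithin] with s hs m
    exact norm_LSeries_term_le_of_norm_le hc hs.out.le m

end FactoredNumbers

/-! ### Twisting by Dirichlet characters -/

section CharacterTwist

open Nat (factoredNumbers)

variable {q : ℕ} [NeZero q]

theorem tendsto_nhdsGT_one_ofReal {F : ℂ → ℂ} (hF : Continuous F) :
    Tendsto (fun s : ℝ => F s) (𝓝[>] 1) (𝓝 (F 1)) := by
  simpa [Function.comp_def] using ((hF.comp Complex.continuous_ofReal).tendsto 1).mono_left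
    (nhdsWithin_le_nhds (s := Set.Ioi 1))

-- This is where `L(1, χ) ≠ 0` enters; for trivial `χ` the pole at `1` does the job.
theorem eq_zero_of_tendsto_mul_LSeries (χ : DirichletCharacter ℂ q) {D : ℝ → ℂ} {d : ℂ}
    (hD : Tendsto D (𝓝[>] 1) (𝓝 d))
    (h : Tendsto (fun s : ℝ => D s * LSeries (fun n => χ n) s) (𝓝[>] 1) (𝓝 0)) : d = 0 := by
  have LSeries_eq {s : ℝ} (hs : 1 < s) : LSeries (fun n => χ n) s = χ.LFunction s :=
    (χ.LFunction_eq_LSeries (by simpa using hs)).symm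
  obtain rfl | hχ := eq_or_ne χ 1
  · have product_tendsto := hD.mul (tendsto_nhdsGT_one_ofReal
      (DirichletCharacter.differentiable_LFunctionTrivChar₁ q).continuous)
    have zero_tendsto := (tendsto_nhdsGT_one_ofReal (F := fun s => s - 1) (by fun_prop)).mul h
    rw [mul_zero] at zero_tendsto
    refine (mul_eq_zero.1 (tendsto_nhds_unique
      (product_tendsto.congr' ?_) zero_tendsto)).resolve_right
      (DirichletCharacter.LFunctionTrivChar₁_apply_one_ne_zero q)
    filter_upwards [self_mem_nhdsWithin] with s hs
    have s_ne : (s : ℂ) ≠ 1 := by exact_mod_cast hs.out.ne'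
    rw [LSeries_eq hs, DirichletCharacter.LFunctionTrivChar₁, Function.update_of_ne s_ne]
    exact mul_left_comm _ _ _
  · have product_tendsto := hD.mul (tendsto_nhdsGT_one_ofReal
      (DirichletCharacter.differentiable_LFunction hχ).continuous)
    refine (mul_eq_zero.1 (tendsto_nhds_unique (product_tendsto.congr' ?_) h)).resolve_right
      (DirichletCharacter.LFunction_apply_one_ne_zero hχ)
    filter_upwards [self_mem_nhdsWithin] with s hs
    rw [LSeries_eq hs]

/-- The `χ`-component of `g` under the action of `(ZMod q)ˣ` by dilations, without the normalising
factor `1 / φ(q)`. -/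
noncomputable def characterTwist (χ : DirichletCharacter ℂ q) (g : ZMod q → ℂ) (x : ZMod q) : ℂ :=
  ∑ u : (ZMod q)ˣ, χ (u⁻¹ : (ZMod q)ˣ) * g (u * x)

variable (χ : DirichletCharacter ℂ q) (g : ZMod q → ℂ)

theorem characterTwist_mul_unit (x : ZMod q) (v : (ZMod q)ˣ) :
    characterTwist χ g (x * v) = characterTwist χ g x * χ v := by
  rw [characterTwist, characterTwist, sum_mul, ← Equiv.sum_comp (Equiv.mulRight v⁻¹)]
  refine sum_congr rfl fun u _ => ?_
  have argument_eq : ((u * v⁻¹ : (ZMod q)ˣ) : ZMod q) * (x * v) = u * x := by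
    rw [Units.val_mul, mul_assoc, mul_left_comm _ x, Units.inv_mul, mul_one]
  rw [Equiv.coe_mulRight, argument_eq, mul_inv_rev, inv_inv, Units.val_mul, map_mul]
  ring

theorem sum_characterTwist (x : ZMod q) :
    ∑ χ : DirichletCharacter ℂ q, characterTwist χ g x = q.totient * g x := by
  have orthogonality (u : (ZMod q)ˣ) :
      ∑ χ : DirichletCharacter ℂ q, χ (u⁻¹ : (ZMod q)ˣ) = if u = 1 then (q.totient : ℂ) else 0 := by
    simpa [ZMod.inv_coe_unit] using DirichletCharacter.sum_char_inv_mul_char_eq ℂ u.isUnit 1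
  simp only [characterTwist]
  rw [sum_comm]
  simp only [← sum_mul, orthogonality, ite_mul, zero_mul, sum_ite_eq', mem_univ, if_true,
    Units.val_one, one_mul]

theorem LSeries_characterTwist {s : ℂ} (hs : 1 < s.re) :
    LSeries (fun n => characterTwist χ g n) s =
      ∑ u : (ZMod q)ˣ, χ (u⁻¹ : (ZMod q)ˣ) * LSeries (fun n => g (u * (n : ZMod q))) s := by
  have twist_eq : (fun n : ℕ => characterTwist χ g n) =
      ∑ u : (ZMod q)ˣ, χ (u⁻¹ : (ZMod q)ˣ) • fun n : ℕ => g (u * (n : ZMod q)) := by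
    ext n
    simp [characterTwist]
  rw [twist_eq, LSeries_sum fun (u : (ZMod q)ˣ) _ =>
    (ZMod.LSeriesSummable_of_one_lt_re (fun x : ZMod q => g (u * x)) hs).smul _]
  simp only [LSeries_smul]

theorem LSeries_characterTwist_eq_mul {s : ℂ} (hs : 1 < s.re) :
    LSeries (fun n => characterTwist χ g n) s =
      (∑' m : factoredNumbers q.primeFactors, LSeries.term (fun n => characterTwist χ g n) s m) *
        LSeries (fun n => χ n) s := by
  refine LSeries_eq_tsum_factoredNumbers_mul_LSeries (NeZero.ne q)
    (ZMod.LSeriesSummable_of_one_lt_re _ hs) (ZMod.LSeriesSummable_of_one_lt_re χ hs)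
    (fun k hk => χ.map_nonunit (by rwa [ZMod.isUnit_iff_coprime])) fun m k hk => ?_
  rw [Nat.cast_mul, ← ZMod.coe_unitOfCoprime k hk, characterTwist_mul_unit]

theorem norm_le_sum_norm_zmod (x : ZMod q) : ‖g x‖ ≤ ∑ y, ‖g y‖ :=
  single_le_sum (f := fun y => ‖g y‖) (fun _ _ => norm_nonneg _) (mem_univ x)

variable {g : ZMod q → ℚ}

theorem tsum_factoredNumbers_characterTwist_eq_zero
    (h : Tendsto (fun n => ∑ i ∈ range n, (g i : ℂ) / (i : ℂ)) atTop (𝓝 0)) :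
    ∑' m : factoredNumbers q.primeFactors,
      LSeries.term (fun n => characterTwist χ (fun x => (g x : ℂ)) n) 1 m = 0 := by
  refine eq_zero_of_tendsto_mul_LSeries χ (tendsto_tsum_factoredNumbers_term
    (fun n => norm_le_sum_norm_zmod (characterTwist χ fun x => (g x : ℂ)) n) _) ?_
  have sum_tendsto : Tendsto (fun s : ℝ => ∑ u : (ZMod q)ˣ, χ (u⁻¹ : (ZMod q)ˣ) *
      LSeries (fun n => (g (u * (n : ZMod q)) : ℂ)) s) (𝓝[>] 1) (𝓝 0) := by
    simpa using tendsto_finsetSum univ fun u _ => (tendsto_LSeries_unit_mul h u).const_mul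
      (χ (u⁻¹ : (ZMod q)ˣ))
  refine sum_tendsto.congr' ?_
  filter_upwards [self_mem_nhdsWithin] with s hs
  have one_lt_re : 1 < (s : ℂ).re := by simpa using hs
  rw [← LSeries_characterTwist_eq_mul χ _ one_lt_re, LSeries_characterTwist χ _ one_lt_re]

theorem tsum_factoredNumbers_term_eq_zero
    (h : Tendsto (fun n => ∑ i ∈ range n, (g i : ℂ) / (i : ℂ)) atTop (𝓝 0)) :
    ∑' m : factoredNumbers q.primeFactors, LSeries.term (fun n => (g n : ℂ)) 1 m = 0 := by
  have sum_eq_zero := sum_eq_zero fun (χ : DirichletCharacter ℂ q) (_ : χ ∈ univ) =>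
    tsum_factoredNumbers_characterTwist_eq_zero χ h
  rw [← Summable.tsum_finsetSum fun χ _ => summable_factoredNumbers_term_one
    (fun n => norm_le_sum_norm_zmod (characterTwist χ fun x => (g x : ℂ)) n) _] at sum_eq_zero
  have sum_term (m : ℕ) : ∑ χ : DirichletCharacter ℂ q,
      LSeries.term (fun n => characterTwist χ (fun x => (g x : ℂ)) n) 1 m =
        q.totient * LSeries.term (fun n => (g n : ℂ)) 1 m := by
    rw [← LSeries.term_sum_apply, ← LSeries.term_smul_apply]
    congr 1
    ext n
    simpa using sum_characterTwist (fun x => (g x : ℂ)) n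
  simp only [sum_term, tsum_mul_left] at sum_eq_zero
  have totient_ne : (q.totient : ℂ) ≠ 0 := by exact_mod_cast (Nat.totient_pos.2 (NeZero.pos q)).ne'
  exact (mul_eq_zero.1 sum_eq_zero).resolve_left totient_ne

theorem hasSum_factoredNumbers_div
    (h : Tendsto (fun n => ∑ i ∈ range n, (g i : ℂ) / (i : ℂ)) atTop (𝓝 0)) :
    HasSum (fun m : factoredNumbers q.primeFactors => (g (m : ℕ) : ℝ) / (m : ℕ)) 0 := by
  have hasSum_term := (summable_factoredNumbers_term_one
    (fun n => norm_le_sum_norm_zmod (fun x : ZMod q => (g x : ℂ)) n) q.primeFactors).hasSum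
  rw [tsum_factoredNumbers_term_eq_zero h] at hasSum_term
  rw [← Complex.hasSum_ofReal, Complex.ofReal_zero]
  convert hasSum_term using 2 with m
  rw [LSeries.term_of_ne_zero (Nat.ne_zero_of_mem_factoredNumbers m.2), Complex.cpow_one]
  push_cast
  rfl

-- All terms of `∑ (1 + g 1 * g m) / m = q / φ(q)` are nonnegative, and the term `m = 1` is `2`.
theorem two_mul_totient_le (hg : ∀ x, |g x| ≤ 1) (hg₁ : |g 1| = 1)
    (h : Tendsto (fun n => ∑ i ∈ range n, (g i : ℂ) / (i : ℂ)) atTop (𝓝 0)) :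
    2 * q.totient ≤ q := by
  have hasSum_weighted := (hasSum_inv_factoredNumbers q.primeFactors).summable.hasSum.add
    ((hasSum_factoredNumbers_div h).mul_left (g 1 : ℝ))
  rw [mul_zero, add_zero] at hasSum_weighted
  have two_le_sum := le_hasSum hasSum_weighted ⟨1, one_mem_factoredNumbers _⟩ fun m _ => ?_
  · have g_one_mul_self : (g 1 : ℝ) * g 1 = 1 := by
      exact_mod_cast (abs_mul_abs_self (g 1)).symm.trans (by rw [hg₁, one_mul])
    simp only [Nat.cast_one, inv_one, div_one, g_one_mul_self, one_add_one_eq_two] at two_le_sum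
    have two_mul_le : (2 : ℝ) * q.totient ≤ q := by
      rw [← tsum_inv_factoredNumbers_primeFactors_mul_totient q]
      gcongr
    exact_mod_cast two_mul_le
  · have neg_one_le : (-1 : ℝ) ≤ g 1 * g (m : ℕ) := by
      have abs_mul_le : |g 1 * g (m : ℕ)| ≤ 1 := by rw [abs_mul, hg₁, one_mul]; exact hg _
      exact_mod_cast (abs_le.1 abs_mul_le).1
    rw [← mul_div_assoc, inv_eq_one_div, ← add_div]
    exact div_nonneg (by linarith) (Nat.cast_nonneg _)

end CharacterTwist

/-! ### The totient obstruction -/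

namespace IsErdosian

variable {q : ℕ} {f : ℕ → ℤ}

theorem apply_add_mul (hf : IsErdosian q f) {n : ℕ} (hn : 1 ≤ n) (k : ℕ) : f (n + q * k) = f n := by
  induction k with
  | zero => rfl
  | succ k ih => rw [mul_add, mul_one, ← add_assoc, hf.1 _ (hn.trans le_self_add), ih]

theorem abs_apply_le_one (hf : IsErdosian q f) {n : ℕ} (hn : 1 ≤ n) : |f n| ≤ 1 := by
  by_cases hqn : q ∣ n
  · simp [hf.2.2 n hn hqn]
  · obtain h | h := hf.2.1 n hn hqn <;> simp [h]

theorem abs_apply_one (hf : IsErdosian q f) (hq : q ≠ 1) : |f 1| = 1 := by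
  obtain h | h := hf.2.1 1 le_rfl (by rwa [Nat.dvd_one]) <;> simp [h]

theorem exists_zmod_lift [NeZero q] (hf : IsErdosian q f) :
    ∃ g : ZMod q → ℚ, ∀ n : ℕ, 1 ≤ n → g n = f n := by
  refine ⟨fun x => f (x.val + q), fun n hn => ?_⟩
  have one_le : 1 ≤ n % q + q := (NeZero.pos q).trans_le le_add_self
  have add_eq : n % q + q + q * (n / q) = n + q := by rw [add_right_comm, Nat.mod_add_div]
  beta_reduce
  rw [ZMod.val_natCast, ← hf.apply_add_mul one_le (n / q), add_eq, hf.1 n hn]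

end IsErdosian

theorem two_mul_totient_le_of_erdosConjectureFalse {q : ℕ} (hq : 2 ≤ q)
    (h : ErdosConjectureFalse q) : 2 * q.totient ≤ q := by
  obtain ⟨f, hf, f_tendsto⟩ := h
  have : NeZero q := ⟨by omega⟩
  obtain ⟨g, hg⟩ := hf.exists_zmod_lift
  refine two_mul_totient_le (g := g) (fun x => ?_) ?_ ?_
  · have one_le : 1 ≤ x.val + q := by omega
    have g_eq := hg _ one_le
    simp only [Nat.cast_add, ZMod.natCast_val, ZMod.cast_id', id, CharP.cast_eq_zero,
      add_zero] at g_eq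
    rw [g_eq]
    exact_mod_cast hf.abs_apply_le_one one_le
  · have g_one := hg 1 le_rfl
    rw [Nat.cast_one] at g_one
    rw [g_one]
    exact_mod_cast hf.abs_apply_one (by omega)
  · rw [← tendsto_add_atTop_iff_nat 1]
    have ofReal_tendsto := (Complex.continuous_ofReal.tendsto 0).comp f_tendsto
    rw [Complex.ofReal_zero] at ofReal_tendsto
    refine ofReal_tendsto.congr fun N => ?_
    rw [sum_range_succ']
    simp only [Nat.cast_zero, div_zero, add_zero, Function.comp]
    rw [Complex.ofReal_sum, ← Ico_add_one_right_eq_Icc, sum_Ico_eq_sum_range]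
    refine sum_congr rfl fun i _ => ?_
    rw [add_comm 1 i, hg _ le_add_self]
    push_cast
    rfl

/-! ### Counting the exceptional moduli -/

section Counting

/-- The least natural number `w` with `w * (1 - 1 / (2 * P)) ≥ 1`, where `P` is the product of
`1 - 1 / p` over the primes `p ∈ {3, 5, 7}` dividing `q`. If all three divide `q` then `P < 1 / 2`
and no such `w` exists; the value there is `0`. -/
def smallPrimeWeight (q : ℕ) : ℕ :=
  if 3 ∣ q then (if 5 ∣ q then (if 7 ∣ q then 0 else 16) else (if 7 ∣ q then 8 else 4))
  else (if 5 ∣ q then (if 7 ∣ q then 4 else 3) else (if 7 ∣ q then 3 else 2))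

theorem smallPrimeWeight_periodic : Function.Periodic smallPrimeWeight 420 := by
  intro q
  have three_dvd : 3 ∣ q + 420 ↔ 3 ∣ q := by omega
  have five_dvd : 5 ∣ q + 420 ↔ 5 ∣ q := by omega
  have seven_dvd : 7 ∣ q + 420 ↔ 7 ∣ q := by omega
  simp only [smallPrimeWeight, three_dvd, five_dvd, seven_dvd]

theorem smallPrimeWeight_prime_mul {p : ℕ} (hp : p.Prime) (hp₁₁ : 11 ≤ p) (k : ℕ) :
    smallPrimeWeight (p * k) = smallPrimeWeight k := by
  have dvd_iff {r : ℕ} (hr : r.Prime) (hr₁₁ : r < 11) : r ∣ p * k ↔ r ∣ k :=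
    ((Nat.coprime_primes hr hp).2 (by omega)).dvd_mul_left
  simp only [smallPrimeWeight, dvd_iff Nat.prime_three (by norm_num),
    dvd_iff Nat.prime_five (by norm_num), dvd_iff Nat.prime_seven (by norm_num)]

theorem sum_range_mul_of_periodic {u : ℕ → ℕ} {P : ℕ} (hu : Function.Periodic u P) (m : ℕ) :
    ∑ k ∈ range (m * P), u k = m * ∑ k ∈ range P, u k := by
  induction m with
  | zero => simp
  | succ m ih =>
    rw [add_mul, one_mul, sum_range_add, ih, add_mul, one_mul]
    refine congrArg _ (sum_congr rfl fun i _ => ?_)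
    rw [add_comm]
    simpa using hu.nat_mul m i

theorem sum_Icc_le_of_periodic {u : ℕ → ℕ} {P : ℕ} (hP : 0 < P) (hu : Function.Periodic u P)
    (Y : ℕ) : ∑ k ∈ Icc 1 Y, u k ≤ (Y / P + 1) * ∑ k ∈ range P, u k := by
  rw [← sum_range_mul_of_periodic hu]
  refine sum_le_sum_of_subset fun k hk => mem_range.2 ?_
  rw [mul_comm]
  exact (mem_Icc.1 hk).2.trans_lt (Nat.lt_mul_div_succ Y hP)

theorem sum_smallPrimeWeight_mod_four {r : ℕ} (hr : r = 1 ∨ r = 3) :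
    ∑ k ∈ range 420, (if k % 4 = r then smallPrimeWeight k else 0) = 388 := by
  obtain rfl | rfl := hr <;> decide +kernel

theorem sum_smallPrimeWeight_multiples_le {p : ℕ} (hp : p.Prime) (hp₁₁ : 11 ≤ p) (X : ℕ) :
    ∑ q ∈ Icc 1 X with q % 4 = 1 ∧ p ∣ q, smallPrimeWeight q ≤ (X / p / 420 + 1) * 388 := by
  have p_mod_four : p % 4 = 1 ∨ p % 4 = 3 := by
    have := hp.eq_two_or_odd
    omega
  have subset_image : {q ∈ Icc 1 X | q % 4 = 1 ∧ p ∣ q} ⊆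
      {k ∈ Icc 1 (X / p) | k % 4 = p % 4}.image (p * ·) := by
    intro q hq
    obtain ⟨q_mem, q_mod_four, k, rfl⟩ := mem_filter.1 hq
    obtain ⟨one_le, le_X⟩ := mem_Icc.1 q_mem
    refine mem_image_of_mem _ (mem_filter.2 ⟨mem_Icc.2 ⟨?_, ?_⟩, ?_⟩)
    · exact Nat.pos_of_mul_pos_left one_le
    · rwa [Nat.le_div_iff_mul_le hp.pos, mul_comm]
    · rw [Nat.mul_mod] at q_mod_four
      obtain h | h := p_mod_four <;> rw [h] at q_mod_four ⊢ <;> omega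
  have periodic : Function.Periodic
      (fun k => if k % 4 = p % 4 then smallPrimeWeight k else 0) 420 := fun k => by
    simp only [smallPrimeWeight_periodic k, Nat.add_mod k 420 4, Nat.reduceMod, add_zero,
      Nat.mod_mod]
  calc ∑ q ∈ Icc 1 X with q % 4 = 1 ∧ p ∣ q, smallPrimeWeight q
    _ ≤ ∑ q ∈ {k ∈ Icc 1 (X / p) | k % 4 = p % 4}.image (p * ·), smallPrimeWeight q :=
      sum_le_sum_of_subset subset_image
    _ = ∑ k ∈ Icc 1 (X / p), if k % 4 = p % 4 then smallPrimeWeight k else 0 := by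
      rw [sum_image fun a _ b _ h => Nat.eq_of_mul_eq_mul_left hp.pos h, ← sum_filter]
      exact sum_congr rfl fun k _ => smallPrimeWeight_prime_mul hp hp₁₁ k
    _ ≤ (X / p / 420 + 1) * 388 := by
      rw [← sum_smallPrimeWeight_mod_four p_mod_four]
      exact sum_Icc_le_of_periodic (by norm_num) periodic _

theorem card_filter_dvd_105_le (X : ℕ) :
    (#{q ∈ Icc 1 X | q % 4 = 1 ∧ 105 ∣ q} : ℝ) ≤ X / 420 + 1 := by
  have periodic : Function.Periodic (fun k => if k % 4 = 1 ∧ 105 ∣ k then 1 else 0) 420 :=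
    fun k => by
      have iff_add : (k + 420) % 4 = 1 ∧ 105 ∣ k + 420 ↔ k % 4 = 1 ∧ 105 ∣ k := by omega
      simp only [iff_add]
  have card_le := sum_Icc_le_of_periodic (by norm_num) periodic X
  have sum_period : ∑ k ∈ range 420, (if k % 4 = 1 ∧ 105 ∣ k then 1 else 0) = 1 := by decide +kernel
  rw [sum_period, mul_one, ← card_filter] at card_le
  calc (#{q ∈ Icc 1 X | q % 4 = 1 ∧ 105 ∣ q} : ℝ)
    _ ≤ (X / 420 : ℕ) + 1 := by exact_mod_cast card_le
    _ ≤ X / 420 + 1 := by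
      gcongr
      exact Nat.cast_div_le

theorem one_sub_sum_inv_le_prod (s : Finset ℕ) :
    1 - ∑ p ∈ s, (p : ℝ)⁻¹ ≤ ∏ p ∈ s, (1 - (p : ℝ)⁻¹) := by
  have inv_le_one (p : ℕ) : (p : ℝ)⁻¹ ≤ 1 := Nat.cast_inv_le_one p
  rw [prod_one_sub_ordered]
  gcongr with p
  refine mul_le_of_le_one_right (by positivity) (prod_le_one (fun i _ => ?_) fun i _ => ?_)
  · linarith [inv_le_one i]
  · exact sub_le_self _ (by positivity)

/-- The sum of the reciprocals of the prime factors of `q` other than `2`, `3`, `5` and `7`. -/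
noncomputable def largePrimeFactorSum (q : ℕ) : ℝ :=
  ∑ p ∈ q.primeFactors with 11 ≤ p, (p : ℝ)⁻¹

theorem largePrimeFactorSum_nonneg (q : ℕ) : 0 ≤ largePrimeFactorSum q :=
  sum_nonneg fun _ _ => by positivity

theorem primeFactors_filter_lt_eleven {q : ℕ} (hq : q % 2 = 1) :
    {p ∈ q.primeFactors | ¬ 11 ≤ p} = {p ∈ ({3, 5, 7} : Finset ℕ) | p ∣ q} := by
  ext p
  simp only [mem_filter, Nat.mem_primeFactors, mem_insert, mem_singleton, not_le]
  constructor
  · rintro ⟨⟨hp, hpq, -⟩, hlt⟩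
    refine ⟨?_, hpq⟩
    have p_ne_two : p ≠ 2 := by rintro rfl; omega
    interval_cases p <;> simp_all (decide := true)
  · rintro ⟨rfl | rfl | rfl, h⟩ <;> exact ⟨⟨by norm_num, h, by omega⟩, by norm_num⟩

theorem one_le_smallPrimeWeight_mul_largePrimeFactorSum {q : ℕ} (hq : q % 2 = 1)
    (h : 2 * q.totient ≤ q) (h₁₀₅ : ¬ 105 ∣ q) :
    1 ≤ smallPrimeWeight q * largePrimeFactorSum q := by
  have q_pos : (0 : ℝ) < q := Nat.cast_pos.2 (by omega)
  have prod_le : 2 * ∏ p ∈ q.primeFactors, (1 - (p : ℝ)⁻¹) ≤ 1 := by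
    have two_mul_totient : (2 * q.totient : ℝ) ≤ q := by exact_mod_cast h
    rw [totient_eq_mul_prod_one_sub_inv, mul_left_comm] at two_mul_totient
    exact (mul_le_iff_le_one_right q_pos).1 two_mul_totient
  rw [← prod_filter_mul_prod_filter_not q.primeFactors (11 ≤ ·), primeFactors_filter_lt_eleven hq,
    prod_filter (s := ({3, 5, 7} : Finset ℕ))] at prod_le
  have bernoulli : 1 - largePrimeFactorSum q ≤ ∏ p ∈ q.primeFactors with 11 ≤ p, (1 - (p : ℝ)⁻¹) :=
    one_sub_sum_inv_le_prod _
  simp only [smallPrimeWeight]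
  by_cases three_dvd : 3 ∣ q <;> by_cases five_dvd : 5 ∣ q <;> by_cases seven_dvd : 7 ∣ q
  · omega
  all_goals
    norm_num [three_dvd, five_dvd, seven_dvd] at prod_le ⊢
    linarith

theorem sum_inv_sq_odd_le (N : ℕ) :
    ∑ j ∈ range N, (((2 * j + 11 : ℕ) : ℝ) ^ 2)⁻¹ ≤ 1 / 20 - 1 / (4 * N + 20) := by
  induction N with
  | zero => norm_num
  | succ N ih =>
    have telescoping : (((2 * N + 11 : ℕ) : ℝ) ^ 2)⁻¹ ≤
        1 / (4 * N + 20) - 1 / (4 * (N + 1 : ℕ) + 20) := by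
      push_cast
      rw [div_sub_div _ _ (by positivity) (by positivity), inv_eq_one_div,
        div_le_div_iff₀ (by positivity) (by positivity)]
      nlinarith [Nat.cast_nonneg (α := ℝ) N]
    rw [sum_range_succ]
    linarith

-- Comparison with the sum over odd numbers alone gives `1 / 20`, which is too weak: the composite
-- numbers `15` and `21` have to be removed.
theorem sum_inv_sq_primes_le {X : ℕ} (hX : 6 ≤ X) :
    ∑ p ∈ Icc 11 X with p.Prime, ((p : ℝ) ^ 2)⁻¹ ≤ 0.0434 := by
  have subset_image : insert 15 (insert 21 {p ∈ Icc 11 X | p.Prime}) ⊆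
      (range X).image fun j => 2 * j + 11 := by
    simp only [insert_subset_iff, mem_image, mem_range]
    refine ⟨⟨2, by omega, rfl⟩, ⟨5, by omega, rfl⟩, fun p hp => mem_image.2 ?_⟩
    obtain ⟨p_mem, p_prime⟩ := mem_filter.1 hp
    have p_odd := p_prime.eq_two_or_odd
    rw [mem_Icc] at p_mem
    exact ⟨(p - 11) / 2, mem_range.2 (by omega), by omega⟩
  have sum_le := sum_le_sum_of_subset_of_nonneg (f := fun p : ℕ => ((p : ℝ) ^ 2)⁻¹) subset_image
    fun _ _ _ => by positivity
  rw [sum_image fun a _ b _ h => by simpa using h, sum_insert (by simp; norm_num),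
    sum_insert (by simp; norm_num)] at sum_le
  have tail_nonneg : 0 ≤ (4 * (X : ℝ) + 20)⁻¹ := by positivity
  have odd_le := sum_inv_sq_odd_le X
  norm_num at sum_le odd_le ⊢
  linarith

theorem sum_inv_primes_le_sqrt {X : ℕ} (hX : 6 ≤ X) :
    ∑ p ∈ Icc 11 X with p.Prime, (p : ℝ)⁻¹ ≤ √X := by
  refine Real.le_sqrt_of_sq_le ?_
  have card_le : (#{p ∈ Icc 11 X | p.Prime} : ℝ) ≤ X := by
    refine Nat.cast_le.2 ((card_filter_le _ _).trans ?_)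
    rw [Nat.card_Icc]
    omega
  calc (∑ p ∈ Icc 11 X with p.Prime, (p : ℝ)⁻¹) ^ 2
    _ ≤ #{p ∈ Icc 11 X | p.Prime} * ∑ p ∈ Icc 11 X with p.Prime, ((p : ℝ)⁻¹) ^ 2 :=
      sq_sum_le_card_mul_sum_sq
    _ ≤ X * 1 := by
      simp only [inv_pow]
      gcongr
      exact (sum_inv_sq_primes_le hX).trans (by norm_num)
    _ = X := mul_one _

theorem smallPrimeWeight_mul_largePrimeFactorSum_eq {q X : ℕ} (hq : q ∈ Icc 1 X) :
    smallPrimeWeight q * largePrimeFactorSum q =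
      ∑ p ∈ Icc 11 X with p.Prime, if p ∣ q then smallPrimeWeight q * (p : ℝ)⁻¹ else 0 := by
  obtain ⟨one_le, le_X⟩ := mem_Icc.1 hq
  rw [largePrimeFactorSum, mul_sum, ← sum_filter]
  refine sum_congr ?_ fun _ _ => rfl
  ext p
  simp only [mem_filter, Nat.mem_primeFactors, mem_Icc]
  refine ⟨fun h => ⟨⟨⟨h.2, (Nat.le_of_dvd one_le h.1.2.1).trans le_X⟩, h.1.1⟩, h.1.2.1⟩,
    fun h => ⟨⟨h.1.2, h.2, by omega⟩, h.1.1.1⟩⟩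

theorem sum_smallPrimeWeight_multiples_mul_inv_le {p : ℕ} (hp : p.Prime) (hp₁₁ : 11 ≤ p) (X : ℕ) :
    ∑ q ∈ Icc 1 X with q % 4 = 1, (if p ∣ q then smallPrimeWeight q * (p : ℝ)⁻¹ else 0) ≤
      388 / 420 * X * ((p : ℝ) ^ 2)⁻¹ + 388 * (p : ℝ)⁻¹ := by
  have p_ne_zero : (p : ℝ) ≠ 0 := Nat.cast_ne_zero.2 hp.ne_zero
  have floor_le : ((X / p / 420 : ℕ) : ℝ) ≤ X / p / 420 :=
    Nat.cast_div_le.trans (by push_cast; gcongr; exact Nat.cast_div_le)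
  have sum_le : (∑ q ∈ Icc 1 X with q % 4 = 1 ∧ p ∣ q, smallPrimeWeight q : ℝ) ≤
      ((X / p / 420 : ℕ) + 1) * 388 := by
    exact_mod_cast sum_smallPrimeWeight_multiples_le hp hp₁₁ X
  rw [← sum_filter, filter_filter, ← sum_mul]
  calc _ ≤ (X / p / 420 + 1) * 388 * (p : ℝ)⁻¹ := by
        gcongr
        exact sum_le.trans (by gcongr)
    _ = 388 / 420 * X * ((p : ℝ) ^ 2)⁻¹ + 388 * (p : ℝ)⁻¹ := by field_simp [p_ne_zero]

theorem sum_smallPrimeWeight_mul_largePrimeFactorSum_le {X : ℕ} (hX : 6 ≤ X) :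
    ∑ q ∈ Icc 1 X with q % 4 = 1, smallPrimeWeight q * largePrimeFactorSum q ≤
      388 / 420 * X * 0.0434 + 388 * √X := by
  calc ∑ q ∈ Icc 1 X with q % 4 = 1, smallPrimeWeight q * largePrimeFactorSum q
    _ = ∑ p ∈ Icc 11 X with p.Prime, ∑ q ∈ Icc 1 X with q % 4 = 1,
        if p ∣ q then smallPrimeWeight q * (p : ℝ)⁻¹ else 0 := by
      rw [sum_comm]
      exact sum_congr rfl fun q hq =>
        smallPrimeWeight_mul_largePrimeFactorSum_eq (mem_filter.1 hq).1
    _ ≤ ∑ p ∈ Icc 11 X with p.Prime, (388 / 420 * X * ((p : ℝ) ^ 2)⁻¹ + 388 * (p : ℝ)⁻¹) :=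
      sum_le_sum fun p hp => sum_smallPrimeWeight_multiples_mul_inv_le (mem_filter.1 hp).2
        (mem_Icc.1 (mem_filter.1 hp).1).1 X
    _ ≤ 388 / 420 * X * 0.0434 + 388 * √X := by
      rw [sum_add_distrib, ← mul_sum, ← mul_sum]
      gcongr
      · exact sum_inv_sq_primes_le hX
      · exact sum_inv_primes_le_sqrt hX

theorem card_filter_one_le_le_sum {ι : Type*} (s : Finset ι) {F : ι → ℝ} (hF : ∀ i ∈ s, 0 ≤ F i) :
    (#{i ∈ s | 1 ≤ F i} : ℝ) ≤ ∑ i ∈ s, F i := by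
  calc (#{i ∈ s | 1 ≤ F i} : ℝ) = ∑ i ∈ s with 1 ≤ F i, (1 : ℝ) := by simp
    _ ≤ ∑ i ∈ s with 1 ≤ F i, F i := sum_le_sum fun i hi => (mem_filter.1 hi).2
    _ ≤ ∑ i ∈ s, F i := sum_le_sum_of_subset_of_nonneg (filter_subset _ _) fun i hi _ => hF i hi

open scoped Classical in
theorem card_erdosConjectureFalse_le {X : ℕ} (hX : 10 ^ 12 ≤ X) :
    (#{q ∈ Icc 1 X | q % 4 = 1 ∧ ErdosConjectureFalse q} : ℝ) ≤ 0.045 * X := by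
  have subset_union : {q ∈ Icc 1 X | q % 4 = 1 ∧ ErdosConjectureFalse q} ⊆
      ({1} ∪ {q ∈ Icc 1 X | q % 4 = 1 ∧ 105 ∣ q}) ∪
        {q ∈ {q ∈ Icc 1 X | q % 4 = 1} | 1 ≤ smallPrimeWeight q * largePrimeFactorSum q} := by
    intro q hq
    obtain ⟨q_mem, q_mod_four, q_false⟩ := mem_filter.1 hq
    simp only [mem_union, mem_singleton, mem_filter, q_mem, q_mod_four, true_and]
    by_contra! h
    obtain ⟨⟨q_ne, not_dvd⟩, lt_one⟩ := h
    exact lt_one.not_ge <| one_le_smallPrimeWeight_mul_largePrimeFactorSum (by omega)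
      (two_mul_totient_le_of_erdosConjectureFalse (by omega) q_false) not_dvd
  have markov := (card_filter_one_le_le_sum {q ∈ Icc 1 X | q % 4 = 1}
    (F := fun q => smallPrimeWeight q * largePrimeFactorSum q)
    fun q _ => mul_nonneg (Nat.cast_nonneg _) (largePrimeFactorSum_nonneg q)).trans
      (sum_smallPrimeWeight_mul_largePrimeFactorSum_le (by omega))
  have card_le := (card_le_card subset_union).trans
    ((card_union_le _ _).trans (Nat.add_le_add_right (card_union_le _ _) _))
  rw [card_singleton, ← Nat.cast_le (α := ℝ)] at card_le
  push_cast at card_le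
  have X_large : (10 ^ 12 : ℝ) ≤ X := by exact_mod_cast hX
  have sqrt_le : 10 ^ 6 * √X ≤ X := by
    have sqrt_large : (10 ^ 6 : ℝ) ≤ √X := Real.le_sqrt_of_sq_le (by linarith)
    nlinarith [Real.mul_self_sqrt (Nat.cast_nonneg (α := ℝ) X)]
  linarith [card_filter_dvd_105_le X]

theorem div_four_le_card (X : ℕ) : (X : ℝ) / 4 ≤ #{q ∈ Icc 1 X | q % 4 = 1} := by
  have image_subset : (range ((X + 3) / 4)).image (4 * · + 1) ⊆ {q ∈ Icc 1 X | q % 4 = 1} := by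
    intro q hq
    obtain ⟨j, hj, rfl⟩ := mem_image.1 hq
    rw [mem_range] at hj
    rw [mem_filter, mem_Icc]
    omega
  have card_le := card_le_card image_subset
  rw [card_image_of_injective _ fun a b h => by simpa using h, card_range] at card_le
  rw [div_le_iff₀ four_pos]
  exact_mod_cast show X ≤ #{q ∈ Icc 1 X | q % 4 = 1} * 4 by omega

open scoped Classical in
theorem div_four_le_card_holds_add_card_false (X : ℕ) :
    (X : ℝ) / 4 ≤ #{q ∈ Icc 1 X | q % 4 = 1 ∧ ErdosConjectureHolds q} +
      #{q ∈ Icc 1 X | q % 4 = 1 ∧ ErdosConjectureFalse q} := by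
  refine (div_four_le_card X).trans_eq ?_
  have not_holds (q : ℕ) : ¬ ErdosConjectureHolds q ↔ ErdosConjectureFalse q := not_not
  rw [← card_filter_add_card_filter_not (ErdosConjectureHolds ·)]
  simp only [filter_filter, not_holds, Nat.cast_add]

end Counting

open scoped Classical in
theorem erdos_true_density_82 :
    0.82 ≤ atTop.liminf (fun X : ℕ =>
      (((Finset.Icc 1 X).filter
        (fun q => q % 4 = 1 ∧ ErdosConjectureHolds q)).card : ℝ) / ((X : ℝ) / 4)) := by
  have card_le (X : ℕ) : (#{q ∈ Icc 1 X | q % 4 = 1 ∧ ErdosConjectureHolds q} : ℝ) ≤ X :=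
    Nat.cast_le.2 ((card_filter_le _ _).trans (by simp))
  refine le_liminf_of_le (isCoboundedUnder_ge_of_le (x := 4) _ fun X => ?_) ?_
  · exact div_le_of_le_mul₀ (by positivity) (by norm_num) (by linarith [card_le X])
  · filter_upwards [eventually_ge_atTop (10 ^ 12)] with X hX
    have X_pos : (0 : ℝ) < X := Nat.cast_pos.2 (by omega)
    rw [le_div_iff₀ (div_pos X_pos four_pos)]
    linarith [div_four_le_card_holds_add_card_false X, card_erdosConjectureFalse_le hX]
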